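/- Theorem 4.1 (existence of approximate correctors): Let d ≥ 2, assume m satisfies the mobility assumptions and W the double-well assumptions, let q be the standing wave and m̄ the effective mobility. Fix a unit vector e ∈ ℝ^d with e ∉ ℝℤ^d and ν > 0. Then there exists P : ℝ × ℝ^d → ℝ, ℤ^d-periodic in its second argument, twice continuously differentiable with bounded derivatives up to order two, such that for all (s,y) ∈ ℝ × ℝ^d: |[m(y, q'(s)e) − m̄(e)] q'(s) − (∂²_s P(s,y) + 2⟨e, D_y ∂_s P(s,y)⟩ + Δ_y P(s,y)) + W''(q(s)) P(s,y)| ≤ ν q'(s). -/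

import Mathlib

open Set Filter Topology MeasureTheory RealInnerProductSpace

noncomputable section

abbrev Euc (d : ℕ) := EuclideanSpace ℝ (Fin d)

def IsIntVec {d : ℕ} (z : Euc d) : Prop := ∀ i, ∃ n : ℤ, z i = (n : ℝ)

/-- p ∈ ℝℤ^d, i.e. p is a real multiple of an integer vector. -/
def RatDir {d : ℕ} (p : Euc d) : Prop :=
  ∃ (c : ℝ) (k : Fin d → ℤ), ∀ i, p i = c * (k i : ℝ)

def unitCube (d : ℕ) : Set (Euc d) := {y | ∀ i, y i ∈ Set.Icc (0:ℝ) 1}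

noncomputable def clTrace {d : ℕ} (A : Euc d →L[ℝ] Euc d) : ℝ :=
  LinearMap.trace ℝ (Euc d) (A : Euc d →ₗ[ℝ] Euc d)

/-- ∂²_s P (s,y). -/
noncomputable def dSS {d : ℕ} (P : ℝ × Euc d → ℝ) (s : ℝ) (y : Euc d) : ℝ :=
  deriv (fun s' => deriv (fun s'' => P (s'', y)) s') s

/-- ⟨e, D_y ∂_s P⟩ (s,y). -/
noncomputable def mixedDeriv {d : ℕ} (e : Euc d) (P : ℝ × Euc d → ℝ) (s : ℝ) (y : Euc d) : ℝ :=
  ⟪e, gradient (fun y' => deriv (fun s' => P (s', y')) s) y⟫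

/-- Δ_y P (s,y). -/
noncomputable def lapY {d : ℕ} (P : ℝ × Euc d → ℝ) (s : ℝ) (y : Euc d) : ℝ :=
  clTrace (fderiv ℝ (fun y' => gradient (fun z => P (s, z)) y') y)

def DoubleWell (W : ℝ → ℝ) : Prop :=
  ContDiff ℝ 3 W ∧
  (∀ u ∈ Set.Icc (-1:ℝ) 1, 0 ≤ W u) ∧
  W (-1) = 0 ∧ W 1 = 0 ∧
  (∀ u ∈ Set.Ioo (-1:ℝ) 1, 0 < W u) ∧
  deriv W (-1) = 0 ∧ deriv W 0 = 0 ∧ deriv W 1 = 0 ∧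
  (∀ u ∈ Set.Ioo (-1:ℝ) 0, 0 < deriv W u) ∧
  (∀ u ∈ Set.Ioo (0:ℝ) 1, deriv W u < 0) ∧
  0 < deriv (deriv W) (-1) ∧ 0 < deriv (deriv W) 1 ∧ deriv (deriv W) 0 < 0

def StandingWave (W q : ℝ → ℝ) : Prop :=
  ContDiff ℝ 2 q ∧ StrictMono q ∧ (∀ s, q s ∈ Set.Ioo (-1:ℝ) 1) ∧ q 0 = 0 ∧
  (∀ s, deriv (deriv q) s = deriv W (q s)) ∧
  Filter.Tendsto q Filter.atTop (nhds 1) ∧ Filter.Tendsto q Filter.atBot (nhds (-1))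

def Mobility (d : ℕ) (m : Euc d → Euc d → ℝ) (θ Θ : ℝ) : Prop :=
  Continuous (fun p : Euc d × Euc d => m p.1 p.2) ∧
  (∀ y v z, IsIntVec z → m (y + z) v = m y v) ∧
  0 < θ ∧ (∀ y v, θ ≤ m y v ∧ m y v ≤ Θ) ∧
  (∃ H : ℝ, ∀ y y' v, |m y v - m y' v| ≤ H * ‖y - y'‖)

/-- The effective mobility. -/
noncomputable def effMob {d : ℕ} (m : Euc d → Euc d → ℝ) (q : ℝ → ℝ) (e : Euc d) : ℝ :=
  (∫ s : ℝ, ∫ y in unitCube d, m y (deriv q s • e) * (deriv q s)^2) /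
  (∫ s : ℝ, (deriv q s)^2)

/-!
The derivative `φ = q'` of the standing wave is a positive, exponentially decaying solution of
`φ'' = V φ` with `V = W''(q)`. By Stone–Weierstrass, `m(y, φ(s)e) - m̄(e)` is, up to an error `ν`,
the sum of its `y`-average minus `m̄(e)` and finitely many modes `α(s) cos⟨K, y⟩ + β(s) sin⟨K, y⟩`
with `K ∈ 2πℤ^d \ {0}` and bounded `α`, `β`. The equation is linear, so it is solved exactly for
each of these sources times `φ`.

* For a mode, the ansatz `R(s) cos⟨K, y - se⟩ + Q(s) sin⟨K, y - se⟩` leaves the scalar equations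
  `R'' = (V + l) R + φγ` with `l = ‖K‖² - ⟨K, e⟩²`, which is positive because `e` is irrational.
  As `φ` is then a strict supersolution of the homogeneous equation, a contraction in the norm
  `sup |R| / φ` applies.
* The average minus `m̄(e)` is orthogonal to `φ²`, so reduction of order solves `R'' = V R + φγ` by
  a bounded `R`.
-/

open scoped BoundedContinuousFunction

section BddContDiff

variable {E E' F F' 𝔸 : Type*} [NormedAddCommGroup E] [NormedSpace ℝ E] [NormedAddCommGroup E']
  [NormedSpace ℝ E'] [NormedAddCommGroup F] [NormedSpace ℝ F] [NormedAddCommGroup F']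
  [NormedSpace ℝ F'] [NormedRing 𝔸] [NormedAlgebra ℝ 𝔸]
  {n m : ℕ}

/-- The space `C_b^n` of functions of class `C^n` whose derivatives up to order `n` are bounded. -/
def BddContDiff (n : ℕ) (f : E → F) : Prop :=
  ContDiff ℝ n f ∧ ∃ C : ℝ, ∀ k : ℕ, k ≤ n → ∀ x, ‖iteratedFDeriv ℝ k f x‖ ≤ C

namespace BddContDiff

lemma of_le {f : E → F} (hf : BddContDiff n f) (hmn : m ≤ n) : BddContDiff m f :=
  ⟨hf.1.of_le (by exact_mod_cast hmn), hf.2.imp fun _ hC k hk => hC k (hk.trans hmn)⟩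

lemma exists_norm_le {f : E → F} (hf : BddContDiff n f) : ∃ C, ∀ x, ‖f x‖ ≤ C :=
  hf.2.imp fun _ hC x => by simpa using hC 0 n.zero_le x

lemma continuous {f : E → F} (hf : BddContDiff n f) : Continuous f :=
  hf.1.continuous

lemma add {f g : E → F} (hf : BddContDiff n f) (hg : BddContDiff n g) :
    BddContDiff n (fun x => f x + g x) := by
  obtain ⟨hf, A, hA⟩ := hf
  obtain ⟨hg, B, hB⟩ := hg
  refine ⟨hf.add hg, A + B, fun k hk x => ?_⟩
  have hkn : (k : WithTop ℕ∞) ≤ n := by exact_mod_cast hk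
  rw [fun_iteratedFDeriv_add_apply (hf.contDiffAt.of_le hkn) (hg.contDiffAt.of_le hkn)]
  exact (norm_add_le _ _).trans (add_le_add (hA k hk x) (hB k hk x))

lemma mul {f g : E → 𝔸} (hf : BddContDiff n f) (hg : BddContDiff n g) :
    BddContDiff n (fun x => f x * g x) := by
  obtain ⟨hf, A, hA⟩ := hf
  obtain ⟨hg, B, hB⟩ := hg
  refine ⟨hf.mul hg, 2 ^ n * (A * B), fun k hk x => ?_⟩
  have hA0 : 0 ≤ A := (norm_nonneg _).trans (hA k hk x)
  have hB0 : 0 ≤ B := (norm_nonneg _).trans (hB k hk x)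
  calc ‖iteratedFDeriv ℝ k (fun x => f x * g x) x‖
      ≤ ∑ i ∈ Finset.range (k + 1), (k.choose i : ℝ) * ‖iteratedFDeriv ℝ i f x‖
          * ‖iteratedFDeriv ℝ (k - i) g x‖ :=
        norm_iteratedFDeriv_mul_le hf hg x (by exact_mod_cast hk)
    _ ≤ ∑ i ∈ Finset.range (k + 1), (k.choose i : ℝ) * (A * B) := by
        refine Finset.sum_le_sum fun i hi => ?_
        rw [mul_assoc]
        gcongr
        · exact hA i ((Nat.lt_succ_iff.1 (Finset.mem_range.1 hi)).trans hk) x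
        · exact hB _ ((Nat.sub_le _ _).trans hk) x
    _ = 2 ^ k * (A * B) := by
        rw [← Finset.sum_mul]
        exact_mod_cast congrArg (fun N : ℕ => (N : ℝ) * (A * B)) (Nat.sum_range_choose k)
    _ ≤ 2 ^ n * (A * B) := by
        gcongr
        exact one_le_two

lemma comp_continuousLinearMap {f : E → F} (hf : BddContDiff n f) (L : E' →L[ℝ] E) :
    BddContDiff n (fun x => f (L x)) := by
  obtain ⟨hf, A, hA⟩ := hf
  refine ⟨hf.comp L.contDiff, A * max 1 ‖L‖ ^ n, fun k hk x => ?_⟩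
  have hkn : (k : WithTop ℕ∞) ≤ n := by exact_mod_cast hk
  have hA0 : 0 ≤ A := (norm_nonneg _).trans (hA k hk (L x))
  change ‖iteratedFDeriv ℝ k (f ∘ L) x‖ ≤ _
  rw [L.iteratedFDeriv_comp_right hf x hkn]
  calc ‖(iteratedFDeriv ℝ k f (L x)).compContinuousLinearMap fun _ => L‖
      ≤ ‖iteratedFDeriv ℝ k f (L x)‖ * ∏ _i : Fin k, ‖L‖ :=
        ContinuousMultilinearMap.norm_compContinuousLinearMap_le _ _
    _ ≤ A * max 1 ‖L‖ ^ n := by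
        rw [Finset.prod_const, Finset.card_univ, Fintype.card_fin]
        gcongr
        · exact hA k hk _
        · exact (pow_le_pow_left₀ (norm_nonneg _) (le_max_right _ _) k).trans
            (pow_le_pow_right₀ (le_max_left _ _) hk)

lemma comp_neg {f : E → F} (hf : BddContDiff n f) : BddContDiff n (fun x => f (-x)) := by
  simpa using hf.comp_continuousLinearMap (-ContinuousLinearMap.id ℝ E)

end BddContDiff

lemma bddContDiff_zero_iff {f : E → F} :
    BddContDiff 0 f ↔ Continuous f ∧ ∃ C, ∀ x, ‖f x‖ ≤ C := by
  simp [BddContDiff, contDiff_zero]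

lemma BddContDiff.continuous_comp [ProperSpace F] {G : F → F'} {f : E → F}
    (hf : BddContDiff n f) (hG : Continuous G) : BddContDiff 0 fun x => G (f x) := by
  obtain ⟨A, hA⟩ := hf.exists_norm_le
  obtain ⟨B, hB⟩ := (isCompact_closedBall (0 : F) A).exists_bound_of_continuousOn hG.continuousOn
  exact bddContDiff_zero_iff.2
    ⟨hG.comp hf.continuous, B, fun x => hB _ (mem_closedBall_zero_iff.2 (hA x))⟩

lemma bddContDiff_const (c : F) : BddContDiff n (fun _ : E => c) := by
  refine ⟨contDiff_const, ‖c‖, fun k _ x => ?_⟩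
  rcases k.eq_zero_or_pos with rfl | hk
  · simp
  · simp [iteratedFDeriv_const_of_ne hk.ne']

lemma BddContDiff.const_mul {f : E → 𝔸} (hf : BddContDiff n f) (c : 𝔸) :
    BddContDiff n (fun x => c * f x) :=
  (bddContDiff_const c).mul hf

lemma BddContDiff.sub {f g : E → 𝔸} (hf : BddContDiff n f) (hg : BddContDiff n g) :
    BddContDiff n (fun x => f x - g x) := by
  simpa [sub_eq_add_neg] using hf.add (hg.const_mul (-1))

lemma bddContDiff_zero_coe (f : E →ᵇ F) : BddContDiff 0 f :=
  bddContDiff_zero_iff.2 ⟨f.continuous, ‖f‖, f.norm_coe_le_norm⟩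

lemma BddContDiff.exists_boundedContinuousFunction_eq {f : E → F} (hf : BddContDiff n f) :
    ∃ g : E →ᵇ F, ⇑g = f :=
  hf.exists_norm_le.elim fun C hC => ⟨.ofNormedAddCommGroup f hf.continuous C hC, rfl⟩

lemma bddContDiff_succ_iff_deriv {f : ℝ → F} :
    BddContDiff (n + 1) f ↔
      Differentiable ℝ f ∧ (∃ C, ∀ x, ‖f x‖ ≤ C) ∧ BddContDiff n (deriv f) := by
  simp only [BddContDiff, norm_iteratedFDeriv_eq_norm_iteratedDeriv, Nat.cast_add, Nat.cast_one,
    contDiff_succ_iff_deriv]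
  constructor
  · rintro ⟨⟨hd, -, hf⟩, C, hC⟩
    exact ⟨hd, ⟨C, fun x => by simpa using hC 0 n.succ.zero_le x⟩, hf, C, fun k hk x => by
      simpa [iteratedDeriv_succ'] using hC (k + 1) (by lia) x⟩
  · rintro ⟨hd, ⟨A, hA⟩, hf, B, hB⟩
    refine ⟨⟨hd, by simp, hf⟩, max A B, fun k hk x => ?_⟩
    cases k with
    | zero => simpa using (hA x).trans (le_max_left A B)
    | succ k => simpa [iteratedDeriv_succ'] using (hB k (by lia) x).trans (le_max_right A B)

end BddContDiff

section SecondDerivative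

variable {F : Type*} [NormedAddCommGroup F] [NormedSpace ℝ F] {u u' u'' : ℝ → F} {A B : ℝ}

lemma iteratedDeriv_two_of_hasDerivAt (hu : ∀ s, HasDerivAt u (u' s) s)
    (hu' : ∀ s, HasDerivAt u' (u'' s) s) : iteratedDeriv 2 u = u'' := by
  rw [iteratedDeriv_succ, iteratedDeriv_one, show deriv u = u' from funext fun s => (hu s).deriv]
  exact funext fun s => (hu' s).deriv

lemma hasDerivAt_deriv_of_contDiff_two (hu : ContDiff ℝ 2 u) (s : ℝ) :
    HasDerivAt (deriv u) (iteratedDeriv 2 u s) s := by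
  rw [iteratedDeriv_succ, iteratedDeriv_one]
  exact (((contDiff_succ_iff_deriv (n := 1)).1 hu).2.2.differentiable one_ne_zero s).hasDerivAt

lemma norm_deriv_le_of_norm_le_of_norm_deriv2_le (hu : ∀ s, HasDerivAt u (u' s) s)
    (hu' : ∀ s, HasDerivAt u' (u'' s) s) (hA : ∀ s, ‖u s‖ ≤ A) (hB : ∀ s, ‖u'' s‖ ≤ B) (s : ℝ) :
    ‖u' s‖ ≤ 2 * A + B := by
  have hs : s ∈ Icc s (s + 1) := left_mem_Icc.2 (by linarith)
  have hs1 : s + 1 ∈ Icc s (s + 1) := right_mem_Icc.2 (by linarith)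
  have hB0 : 0 ≤ B := (norm_nonneg _).trans (hB s)
  have slope_bound : ∀ t ∈ Icc s (s + 1), ‖u' t - u' s‖ ≤ B := fun t ht => by
    refine (convex_univ.norm_image_sub_le_of_norm_hasDerivWithin_le
      (fun x _ => (hu' x).hasDerivWithinAt) (fun x _ => hB x) (mem_univ s) (mem_univ t)).trans ?_
    refine mul_le_of_le_one_right hB0 ?_
    rw [Real.norm_eq_abs, abs_le]
    constructor <;> linarith [ht.1, ht.2]
  have taylor : ‖(u (s + 1) - (s + 1) • u' s) - (u s - s • u' s)‖ ≤ B := by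
    simpa using (convex_Icc s (s + 1)).norm_image_sub_le_of_norm_hasDerivWithin_le
      (f := fun t => u t - t • u' s) (f' := fun t => u' t - u' s)
      (fun t _ => by
        simpa using ((hu t).fun_sub ((hasDerivAt_id t).smul_const (u' s))).hasDerivWithinAt)
      slope_bound hs hs1
  calc ‖u' s‖ = ‖u (s + 1) - u s - ((u (s + 1) - (s + 1) • u' s) - (u s - s • u' s))‖ := by
        congr 1
        module
    _ ≤ ‖u (s + 1)‖ + ‖u s‖ + ‖(u (s + 1) - (s + 1) • u' s) - (u s - s • u' s)‖ :=
        (norm_sub_le _ _).trans (add_le_add_left (norm_sub_le _ _) _)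
    _ ≤ 2 * A + B := by linarith [hA (s + 1), hA s]

lemma bddContDiff_two_of_hasDerivAt (hu : ∀ s, HasDerivAt u (u' s) s)
    (hu' : ∀ s, HasDerivAt u' (u'' s) s) (hb : ∃ C, ∀ s, ‖u s‖ ≤ C) (hc : BddContDiff 0 u'') :
    BddContDiff 2 u := by
  have deriv_u : deriv u = u' := funext fun s => (hu s).deriv
  have deriv_u' : deriv u' = u'' := funext fun s => (hu' s).deriv
  obtain ⟨A, hA⟩ := hb
  obtain ⟨B, hB⟩ := hc.exists_norm_le
  refine bddContDiff_succ_iff_deriv.2 ⟨fun s => (hu s).differentiableAt, ⟨A, hA⟩,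
    bddContDiff_succ_iff_deriv.2 ?_⟩
  rw [deriv_u, deriv_u']
  exact ⟨fun s => (hu' s).differentiableAt,
    ⟨2 * A + B, norm_deriv_le_of_norm_le_of_norm_deriv2_le hu hu' hA hB⟩, hc⟩

namespace BddContDiff

lemma differentiable (hu : BddContDiff 2 u) : Differentiable ℝ u :=
  hu.1.differentiable two_ne_zero

lemma deriv (hu : BddContDiff 2 u) : BddContDiff 1 (deriv u) :=
  (bddContDiff_succ_iff_deriv.1 hu).2.2

lemma hasDerivAt_deriv (hu : BddContDiff 2 u) (s : ℝ) :
    HasDerivAt (_root_.deriv u) (iteratedDeriv 2 u s) s :=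
  hasDerivAt_deriv_of_contDiff_two hu.1 s

end BddContDiff

end SecondDerivative

section Comparison

variable {u v φ : ℝ → ℝ} {k a : ℝ}

lemma monotoneOn_exp_mul_of_nonneg_deriv_add_mul (hu : Differentiable ℝ u) {D : Set ℝ}
    (hD : Convex ℝ D) (h : ∀ s ∈ D, 0 ≤ deriv u s + k * u s) :
    MonotoneOn (fun s => Real.exp (k * s) * u s) D := by
  have hderiv (s : ℝ) : HasDerivAt (fun s => Real.exp (k * s) * u s)
      (Real.exp (k * s) * (deriv u s + k * u s)) s :=
    (((hasDerivAt_id s).const_mul k).exp.mul (hu s).hasDerivAt).congr_deriv (by simp; ring)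
  exact monotoneOn_of_hasDerivWithinAt_nonneg hD
    (fun s _ => (hderiv s).continuousAt.continuousWithinAt) (fun s _ => (hderiv s).hasDerivWithinAt)
    fun s hs => mul_nonneg (Real.exp_pos _).le (h s (interior_subset hs))

lemma nonneg_of_nonneg_deriv_add_mul (hk : 0 < k) (hu : Differentiable ℝ u)
    (hb : ∃ C, ∀ s, ‖u s‖ ≤ C) (h : ∀ s ≤ a, 0 ≤ deriv u s + k * u s) {s : ℝ} (hs : s ≤ a) :
    0 ≤ u s := by
  obtain ⟨C, hC⟩ := hb
  have hlim : Tendsto (fun t => Real.exp (k * t) * u t) atBot (𝓝 0) :=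
    (Real.tendsto_exp_atBot.comp (tendsto_id.const_mul_atBot hk)).zero_mul_isBoundedUnder_le
      (isBoundedUnder_of ⟨C, hC⟩)
  have hmono := monotoneOn_exp_mul_of_nonneg_deriv_add_mul hu (convex_Iic a) h
  have : 0 ≤ Real.exp (k * s) * u s :=
    le_of_tendsto hlim ((eventually_le_atBot s).mono fun t ht => hmono (ht.trans hs) hs ht)
  exact nonneg_of_mul_nonneg_right this (Real.exp_pos _)

lemma mul_le_deriv_of_sq_mul_le (hk : 0 < k) (hu : BddContDiff 2 u)
    (h : ∀ s ≤ a, k ^ 2 * u s ≤ iteratedDeriv 2 u s) {s : ℝ} (hs : s ≤ a) :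
    k * u s ≤ deriv u s := by
  have hw (s : ℝ) : HasDerivAt (fun s => deriv u s - k * u s)
      (iteratedDeriv 2 u s - k * deriv u s) s :=
    (hu.hasDerivAt_deriv s).sub ((hu.differentiable s).hasDerivAt.const_mul k)
  have := nonneg_of_nonneg_deriv_add_mul hk (fun s => (hw s).differentiableAt)
    (hu.deriv.of_le zero_le_one |>.sub ((hu.of_le zero_le_two).const_mul k)).exists_norm_le
    (fun s hs => by rw [(hw s).deriv]; linarith [h s hs]) hs
  linarith

lemma nonneg_deriv_add_mul_of_le_sq_mul (hk : 0 < k) (hu : BddContDiff 2 u)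
    (h : ∀ s, iteratedDeriv 2 u s ≤ k ^ 2 * u s) (s : ℝ) : 0 ≤ deriv u s + k * u s := by
  have := mul_le_deriv_of_sq_mul_le (u := fun s => -u (-s)) hk
    (by simpa using hu.comp_neg.const_mul (-1))
    (fun s _ => by
      simp only [iteratedDeriv_fun_neg, iteratedDeriv_comp_neg]
      simpa using h (-s)) (le_refl (-s))
  simp only [deriv.fun_neg, deriv_comp_neg, neg_neg] at this
  linarith

lemma monotone_exp_mul_of_le_sq_mul (hk : 0 < k) (hu : BddContDiff 2 u)
    (h : ∀ s, iteratedDeriv 2 u s ≤ k ^ 2 * u s) : Monotone fun s => Real.exp (k * s) * u s :=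
  monotoneOn_univ.1 <| monotoneOn_exp_mul_of_nonneg_deriv_add_mul hu.differentiable convex_univ
    fun s _ => nonneg_deriv_add_mul_of_le_sq_mul hk hu h s

lemma nonneg_of_le_sq_mul (hk : 0 < k) (hu : BddContDiff 2 u)
    (h : ∀ s, iteratedDeriv 2 u s ≤ k ^ 2 * u s) (s : ℝ) : 0 ≤ u s :=
  nonneg_of_nonneg_deriv_add_mul hk hu.differentiable hu.exists_norm_le
    (fun t _ => nonneg_deriv_add_mul_of_le_sq_mul hk hu h t) (le_refl s)

lemma abs_le_of_abs_sq_mul_sub_le (hk : 0 < k) (hv : BddContDiff 2 v) (hφ : BddContDiff 2 φ)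
    (h : ∀ s, |k ^ 2 * v s - iteratedDeriv 2 v s| ≤ k ^ 2 * φ s - iteratedDeriv 2 φ s) (s : ℝ) :
    |v s| ≤ φ s := by
  have hupper := nonneg_of_le_sq_mul hk (hφ.sub hv) (fun s => by
    rw [iteratedDeriv_fun_sub hφ.1.contDiffAt hv.1.contDiffAt]
    linarith [le_of_abs_le (h s)]) s
  have hlower := nonneg_of_le_sq_mul hk (hφ.add hv) (fun s => by
    rw [iteratedDeriv_fun_add hφ.1.contDiffAt hv.1.contDiffAt]
    linarith [neg_le_of_abs_le (h s)]) s
  exact abs_le.2 ⟨by linarith, by linarith⟩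

end Comparison

section Resolvent

variable {φ V G : ℝ → ℝ} {k l : ℝ}

lemma hasDerivAt_integral_Iic (hG : Continuous G) (hint : ∀ s, IntegrableOn G (Iic s)) (s : ℝ) :
    HasDerivAt (fun s => ∫ t in Iic s, G t) (G s) s := by
  have hsplit : (fun s => ∫ t in Iic s, G t) = fun s => (∫ t in Iic 0, G t) + ∫ t in 0..s, G t :=
    funext fun x => by rw [← intervalIntegral.integral_Iic_sub_Iic (hint 0) (hint x)]; ring
  rw [hsplit]
  exact (hG.integral_hasStrictDerivAt 0 s).hasDerivAt.const_add _

lemma exists_bounded_hasDerivAt_sub_mul (hk : 0 < k) (hG : BddContDiff 0 G) :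
    ∃ u : ℝ → ℝ, (∃ C, ∀ s, ‖u s‖ ≤ C) ∧ ∀ s, HasDerivAt u (G s - k * u s) s := by
  obtain ⟨C, hC⟩ := hG.exists_norm_le
  have exp_integrable (s : ℝ) := integrableOn_exp_mul_Iic hk s
  have exp_cancel (s : ℝ) : Real.exp (-(k * s)) * Real.exp (k * s) = 1 := by
    rw [← Real.exp_add, neg_add_cancel, Real.exp_zero]
  refine ⟨fun s => Real.exp (-(k * s)) * ∫ t in Iic s, Real.exp (k * t) * G t,
    ⟨C / k, fun s => ?_⟩, fun s => ?_⟩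
  · have : ‖∫ t in Iic s, Real.exp (k * t) * G t‖ ≤ ∫ t in Iic s, Real.exp (k * t) * C := by
      refine norm_integral_le_of_norm_le ((exp_integrable s).mul_const C) (.of_forall fun t => ?_)
      rw [norm_mul, Real.norm_eq_abs, Real.abs_exp]
      exact mul_le_mul_of_nonneg_left (hC t) (Real.exp_pos _).le
    rw [integral_mul_const, integral_exp_mul_Iic hk] at this
    calc ‖Real.exp (-(k * s)) * ∫ t in Iic s, Real.exp (k * t) * G t‖
        ≤ Real.exp (-(k * s)) * (Real.exp (k * s) / k * C) := by
          rw [norm_mul, Real.norm_eq_abs, Real.abs_exp]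
          exact mul_le_mul_of_nonneg_left this (Real.exp_pos _).le
      _ = C / k := by linear_combination C / k * exp_cancel s
  · have hI := hasDerivAt_integral_Iic (G := fun t => Real.exp (k * t) * G t)
      (by have := hG.continuous; fun_prop)
      (fun s => (exp_integrable s).mul_bdd hG.continuous.aestronglyMeasurable (.of_forall hC)) s
    refine (((hasDerivAt_id s).const_mul k).neg.exp.mul hI).congr_deriv ?_
    simp only [Pi.neg_apply, id_eq]
    linear_combination G s * exp_cancel s

lemma exists_bddContDiff_iteratedDeriv_eq_sq_mul_sub (hk : 0 < k) (hG : BddContDiff 0 G) :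
    ∃ v : ℝ → ℝ, BddContDiff 2 v ∧ ∀ s, iteratedDeriv 2 v s = k ^ 2 * v s - G s := by
  obtain ⟨w, hw, hw'⟩ := exists_bounded_hasDerivAt_sub_mul hk hG.comp_neg
  have hw'_neg (s : ℝ) : HasDerivAt (fun s => w (-s)) (k * w (-s) - G s) s := by
    simpa [Function.comp_def] using (hw' (-s)).scomp s (hasDerivAt_neg s)
  have hw_cont : Continuous w := continuous_iff_continuousAt.2 fun s => (hw' s).continuousAt
  obtain ⟨v, hv, hv'⟩ := exists_bounded_hasDerivAt_sub_mul hk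
    (BddContDiff.comp_neg (bddContDiff_zero_iff.2 ⟨hw_cont, hw⟩))
  have hv'' (s : ℝ) : HasDerivAt (fun s => w (-s) - k * v s) (k ^ 2 * v s - G s) s :=
    ((hw'_neg s).sub ((hv' s).const_mul k)).congr_deriv (by ring)
  have hv_cont : Continuous v := continuous_iff_continuousAt.2 fun s => (hv' s).continuousAt
  refine ⟨v, bddContDiff_two_of_hasDerivAt hv' hv'' hv ?_,
    congrFun (iteratedDeriv_two_of_hasDerivAt hv' hv'')⟩
  exact ((bddContDiff_zero_iff.2 ⟨hv_cont, hv⟩).const_mul (k ^ 2)).sub hG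

lemma exists_weighted_resolvent (hk : 0 < k) (hφ : BddContDiff 2 φ) (hpos : ∀ s, 0 < φ s)
    (hsuper : ∀ s, φ s ≤ k ^ 2 * φ s - iteratedDeriv 2 φ s) (g : ℝ →ᵇ ℝ) :
    ∃ h : ℝ →ᵇ ℝ, BddContDiff 2 (fun s => φ s * h s) ∧
      ∀ s, iteratedDeriv 2 (fun s => φ s * h s) s = k ^ 2 * (φ s * h s) - φ s * g s := by
  obtain ⟨v, hv, hv'⟩ := exists_bddContDiff_iteratedDeriv_eq_sq_mul_sub hk
    ((hφ.of_le zero_le_two).mul (bddContDiff_zero_coe g))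
  have hbound := abs_le_of_abs_sq_mul_sub_le hk hv (hφ.const_mul ‖g‖) fun s => by
    rw [hv', sub_sub_cancel, iteratedDeriv_const_mul_field, abs_mul, abs_of_pos (hpos s)]
    have := mul_le_mul (hsuper s) (g.norm_coe_le_norm s) (norm_nonneg _)
      ((hpos s).le.trans (hsuper s))
    rw [Real.norm_eq_abs] at this
    linarith
  obtain ⟨h, rfl⟩ : ∃ h : ℝ →ᵇ ℝ, v = fun s => φ s * h s :=
    ⟨.ofNormedAddCommGroup (fun s => v s / φ s)
      (hv.continuous.div hφ.continuous fun s => (hpos s).ne') ‖g‖ fun s => by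
        rw [norm_div, Real.norm_eq_abs, Real.norm_eq_abs, abs_of_pos (hpos s),
          div_le_iff₀ (hpos s)]
        exact hbound s,
      funext fun s => (mul_div_cancel₀ _ (hpos s).ne').symm⟩
  exact ⟨h, hv, hv'⟩

lemma abs_sub_le_of_weighted_resolvent (hk : 0 < k) (hφ : BddContDiff 2 φ) (hpos : ∀ s, 0 < φ s)
    {g₁ g₂ h₁ h₂ : ℝ → ℝ} {c : ℝ} (hh₁ : BddContDiff 2 fun s => φ s * h₁ s)
    (hh₂ : BddContDiff 2 fun s => φ s * h₂ s)
    (heq₁ : ∀ s, iteratedDeriv 2 (fun s => φ s * h₁ s) s = k ^ 2 * (φ s * h₁ s) - φ s * g₁ s)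
    (heq₂ : ∀ s, iteratedDeriv 2 (fun s => φ s * h₂ s) s = k ^ 2 * (φ s * h₂ s) - φ s * g₂ s)
    (hg : ∀ s, φ s * |g₁ s - g₂ s| ≤ c * (k ^ 2 * φ s - iteratedDeriv 2 φ s)) (s : ℝ) :
    |h₁ s - h₂ s| ≤ c := by
  have := abs_le_of_abs_sq_mul_sub_le hk (hh₁.sub hh₂) (hφ.const_mul c) (fun s => by
    rw [iteratedDeriv_fun_sub hh₁.1.contDiffAt hh₂.1.contDiffAt, heq₁, heq₂,
      iteratedDeriv_const_mul_field]
    calc _ = |φ s * (g₁ s - g₂ s)| := by ring_nf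
      _ ≤ _ := by
        rw [abs_mul, abs_of_pos (hpos s)]
        linarith [hg s]) s
  rw [← mul_sub, abs_mul, abs_of_pos (hpos s), mul_comm] at this
  exact le_of_mul_le_mul_right this (hpos s)

-- `h ↦ T (b h - γ)`, with `T` the weighted resolvent, is a contraction of ratio `M / (M + l)`.
lemma exists_weighted_resolvent_fixedPoint (hk : 0 < k) (hφ : BddContDiff 2 φ)
    (hpos : ∀ s, 0 < φ s) {b : ℝ →ᵇ ℝ} {M : ℝ} (hb1 : ∀ s, 1 ≤ b s) (hbM : ∀ s, b s ≤ M)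
    (hl : 0 < l) (hsuper : ∀ s, (b s + l) * φ s ≤ k ^ 2 * φ s - iteratedDeriv 2 φ s)
    (γ : ℝ →ᵇ ℝ) :
    ∃ h : ℝ → ℝ, BddContDiff 2 (fun s => φ s * h s) ∧ ∀ s,
      iteratedDeriv 2 (fun s => φ s * h s) s = k ^ 2 * (φ s * h s) - φ s * (b s * h s - γ s) := by
  have hM : 0 < M := by linarith [hb1 0, hbM 0]
  choose T hT hT' using exists_weighted_resolvent hk hφ hpos fun s =>
    (le_mul_of_one_le_left (hpos s).le (by linarith [hb1 s])).trans (hsuper s)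
  set ρ : ℝ := M / (M + l) with hρ
  have hρ0 : 0 ≤ ρ := by positivity
  have hρ1 : ρ < 1 := (div_lt_one (by linarith)).2 (by linarith)
  have hbρ (s : ℝ) : b s ≤ ρ * (b s + l) := by
    rw [hρ, div_mul_eq_mul_div, le_div_iff₀ (by linarith)]
    nlinarith [hbM s]
  have hcontr : ContractingWith ⟨ρ, hρ0⟩ fun h => T (b * h - γ) := by
    refine ⟨by exact_mod_cast hρ1, LipschitzWith.of_dist_le_mul fun h₁ h₂ => ?_⟩
    refine (BoundedContinuousFunction.dist_le (mul_nonneg hρ0 dist_nonneg)).2 <|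
      abs_sub_le_of_weighted_resolvent hk hφ hpos (hT _) (hT _) (hT' _) (hT' _) fun s => ?_
    have hb0 : 0 ≤ b s := zero_le_one.trans (hb1 s)
    calc φ s * |(b * h₁ - γ) s - (b * h₂ - γ) s| = φ s * (b s * dist (h₁ s) (h₂ s)) := by
          rw [Real.dist_eq, ← abs_of_nonneg hb0, ← abs_mul]
          simp [mul_sub]
      _ ≤ φ s * ((ρ * (b s + l)) * dist h₁ h₂) := by
          have := (hpos s).le
          gcongr
          · exact hbρ s
          · exact BoundedContinuousFunction.dist_coe_le_dist s
      _ = ρ * dist h₁ h₂ * ((b s + l) * φ s) := by ring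
      _ ≤ _ := by
          gcongr
          exact hsuper s
  obtain ⟨h, hh⟩ : ∃ h, T (b * h - γ) = h := ⟨_, hcontr.fixedPoint_isFixedPt⟩
  have hT'h := hT' (b * h - γ)
  rw [hh] at hT'h
  exact ⟨h, hh ▸ hT (b * h - γ), hT'h⟩

theorem exists_bddContDiff_iteratedDeriv_eq_of_supersolution (hφ : BddContDiff 2 φ)
    (hpos : ∀ s, 0 < φ s) (hV : BddContDiff 0 V) (hl : 0 < l)
    (hsuper : ∀ s, iteratedDeriv 2 φ s ≤ (V s - l) * φ s) {γ : ℝ → ℝ} (hγ : BddContDiff 0 γ) :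
    ∃ R : ℝ → ℝ, BddContDiff 2 R ∧ ∀ s, iteratedDeriv 2 R s = V s * R s + φ s * γ s := by
  obtain ⟨γ, rfl⟩ := hγ.exists_boundedContinuousFunction_eq
  obtain ⟨C, hC⟩ := hV.exists_norm_le
  have hC0 : 0 ≤ C := (norm_nonneg _).trans (hC 0)
  obtain ⟨k, hk, hk2⟩ : ∃ k : ℝ, 0 < k ∧ k ^ 2 = C + 1 :=
    ⟨√(C + 1), Real.sqrt_pos.2 (by linarith), Real.sq_sqrt (by linarith)⟩
  obtain ⟨b, hb⟩ := ((bddContDiff_const (k ^ 2)).sub hV).exists_boundedContinuousFunction_eq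
  replace hb : ∀ s, b s = k ^ 2 - V s := congrFun hb
  obtain ⟨h, hh, hh'⟩ := exists_weighted_resolvent_fixedPoint (b := b) (M := 2 * C + 1) hk hφ hpos
    (fun s => by linarith [hb s, (abs_le.1 (hC s)).2])
    (fun s => by linarith [hb s, (abs_le.1 (hC s)).1]) hl
    (fun s => by rw [hb]; linarith [hsuper s]) γ
  exact ⟨_, hh, fun s => by rw [hh', hb]; ring⟩

end Resolvent

lemma exists_le_mul_of_monotoneOn_Iic {f : ℝ → ℝ} (hf : Continuous f) (hpos : ∀ s, 0 < f s) {a : ℝ}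
    (hmono : MonotoneOn f (Iic a)) (b : ℝ) : ∃ C, ∀ s t, s ≤ t → t ≤ b → f s ≤ C * f t := by
  obtain ⟨x, -, hx⟩ := (isCompact_Icc (a := min a b) (b := b)).exists_isMaxOn
    ⟨b, right_mem_Icc.2 (min_le_right _ _)⟩ hf.continuousOn
  obtain ⟨y, -, hy⟩ := (isCompact_Icc (a := min a b) (b := b)).exists_isMinOn
    ⟨b, right_mem_Icc.2 (min_le_right _ _)⟩ hf.continuousOn
  refine ⟨max 1 (f x / f y), fun s t hst htb => ?_⟩
  rcases le_total t (min a b) with ht | ht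
  · have hta := ht.trans (min_le_left a b)
    exact (hmono (hst.trans hta) hta hst).trans
      (le_mul_of_one_le_left (hpos t).le (le_max_left _ _))
  · have hs : f s ≤ f x := by
      rcases le_total s (min a b) with h | h
      · exact (hmono (h.trans (min_le_left a b)) (min_le_left a b) h).trans
          (hx ⟨le_rfl, min_le_right a b⟩)
      · exact hx ⟨h, hst.trans htb⟩
    calc f s ≤ f x / f y * f y := by rwa [div_mul_cancel₀ _ (hpos y).ne']
      _ ≤ max 1 (f x / f y) * f t := by
        have := hpos y
        gcongr
        · exact le_max_right _ _
        · exact hy ⟨ht, htb⟩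

/-- `φ` is a positive bounded solution of the Schrödinger equation `φ'' = V φ`, where the bounded
continuous potential `V` is bounded below by a positive constant near `±∞`. The equation linearised
at the standing wave `q` is of this type, with `V = W'' ∘ q` and `φ = q'`. -/
structure IsGroundState (V φ : ℝ → ℝ) : Prop where
  bddContDiff_potential : BddContDiff 0 V
  bddContDiff : BddContDiff 2 φ
  pos : ∀ s, 0 < φ s
  iteratedDeriv_two_eq : ∀ s, iteratedDeriv 2 φ s = V s * φ s
  eventually_le_potential : ∃ c > 0, ∀ᶠ s in cocompact ℝ, c ≤ V s

namespace IsGroundState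

variable {V φ γ : ℝ → ℝ}

lemma comp_neg (h : IsGroundState V φ) : IsGroundState (fun s => V (-s)) fun s => φ (-s) where
  bddContDiff_potential := h.bddContDiff_potential.comp_neg
  bddContDiff := h.bddContDiff.comp_neg
  pos s := h.pos (-s)
  iteratedDeriv_two_eq s := by simp [iteratedDeriv_comp_neg, h.iteratedDeriv_two_eq]
  eventually_le_potential := by
    obtain ⟨c, hc, hV⟩ := h.eventually_le_potential
    exact ⟨c, hc, (Homeomorph.neg ℝ).isClosedEmbedding.tendsto_cocompact.eventually hV⟩

lemma exists_exp_decay_Iic (h : IsGroundState V φ) :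
    ∃ C μ, 0 < μ ∧ ∀ s t, s ≤ t → t ≤ 0 → φ s ≤ C * Real.exp (μ * (s - t)) * φ t := by
  obtain ⟨c, hc, hV⟩ := h.eventually_le_potential
  rw [cocompact_eq_atBot_atTop] at hV
  obtain ⟨a, ha⟩ := eventually_atBot.1 (eventually_sup.1 hV).1
  set μ := √c with hμ
  have hμ0 : 0 < μ := Real.sqrt_pos.2 hc
  have hderiv (s : ℝ) (hs : s ≤ a) : μ * φ s ≤ deriv φ s :=
    mul_le_deriv_of_sq_mul_le hμ0 h.bddContDiff (fun s hs => by
      rw [h.iteratedDeriv_two_eq, hμ, Real.sq_sqrt hc.le]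
      exact mul_le_mul_of_nonneg_right (ha s hs) (h.pos s).le) hs
  have hmono := monotoneOn_exp_mul_of_nonneg_deriv_add_mul (k := -μ) h.bddContDiff.differentiable
    (convex_Iic a) fun s hs => by linarith [hderiv s hs]
  obtain ⟨C, hC⟩ := exists_le_mul_of_monotoneOn_Iic
    (by have := h.bddContDiff.continuous; fun_prop)
    (fun s => mul_pos (Real.exp_pos _) (h.pos s)) hmono 0
  refine ⟨C, μ, hμ0, fun s t hst ht => ?_⟩
  calc φ s = Real.exp (μ * s) * (Real.exp (-μ * s) * φ s) := by
        rw [← mul_assoc, ← Real.exp_add]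
        simp
    _ ≤ Real.exp (μ * s) * (C * (Real.exp (-μ * t) * φ t)) := by
        exact mul_le_mul_of_nonneg_left (hC s t hst ht) (Real.exp_pos _).le
    _ = C * Real.exp (μ * (s - t)) * φ t := by
        rw [mul_sub, sub_eq_add_neg, Real.exp_add, neg_mul]
        ring

lemma exists_sq_le_exp (h : IsGroundState V φ) :
    ∃ C μ, 0 < μ ∧ ∀ s t, s ≤ t → t ≤ 0 →
      φ s ^ 2 ≤ Real.exp (μ * s) * (C * Real.exp (-(μ * t)) * φ t ^ 2) := by
  obtain ⟨C, μ, hμ, hC⟩ := h.exists_exp_decay_Iic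
  refine ⟨C ^ 2, 2 * μ, by linarith, fun s t hst ht => ?_⟩
  refine (pow_le_pow_left₀ (h.pos s).le (hC s t hst ht) 2).trans (le_of_eq ?_)
  rw [mul_pow, mul_pow, ← Real.exp_nat_mul, show ((2 : ℕ) : ℝ) * (μ * (s - t)) =
    2 * μ * s + -(2 * μ * t) by push_cast; ring, Real.exp_add]
  ring

lemma integrableOn_sq_Iic (h : IsGroundState V φ) : IntegrableOn (fun s => φ s ^ 2) (Iic 0) := by
  obtain ⟨C, μ, hμ, hC⟩ := h.exists_sq_le_exp
  refine ((integrableOn_exp_mul_Iic hμ 0).mul_const (C * Real.exp (-(μ * 0)) * φ 0 ^ 2)).mono'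
    (h.bddContDiff.continuous.pow 2).aestronglyMeasurable ?_
  filter_upwards [ae_restrict_mem measurableSet_Iic] with s hs
  rw [Real.norm_eq_abs, abs_sq]
  exact hC s 0 hs le_rfl

lemma integrable_sq (h : IsGroundState V φ) : Integrable fun s => φ s ^ 2 := by
  have hIoi : IntegrableOn (fun s => φ s ^ 2) (Ici 0) := by
    rw [integrableOn_Ici_iff_integrableOn_Ioi]
    have := h.comp_neg.integrableOn_sq_Iic.mono_set Iio_subset_Iic_self
    rw [← neg_zero] at this
    simpa only [neg_neg] using this.comp_neg_Ioi
  rw [← integrableOn_univ, ← Iic_union_Ici (a := (0 : ℝ))]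
  exact h.integrableOn_sq_Iic.union hIoi

lemma integrable_mul_sq (h : IsGroundState V φ) (hγ : BddContDiff 0 γ) :
    Integrable fun s => γ s * φ s ^ 2 :=
  hγ.exists_norm_le.elim fun _ hC =>
    h.integrable_sq.bdd_mul hγ.continuous.aestronglyMeasurable (.of_forall hC)

lemma exists_abs_integral_Iic_le_of_nonpos (h : IsGroundState V φ) (hγ : BddContDiff 0 γ) :
    ∃ C, ∀ s ≤ 0, |∫ t in Iic s, γ t * φ t ^ 2| ≤ C * φ s ^ 2 := by
  obtain ⟨C, μ, hμ, hC⟩ := h.exists_sq_le_exp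
  obtain ⟨K, hK⟩ := hγ.exists_norm_le
  have hK0 : 0 ≤ K := (norm_nonneg _).trans (hK 0)
  refine ⟨K * C / μ, fun s hs => ?_⟩
  have hle : ∀ᵐ t ∂volume.restrict (Iic s), ‖γ t * φ t ^ 2‖ ≤
      Real.exp (μ * t) * (K * (C * Real.exp (-(μ * s)) * φ s ^ 2)) := by
    filter_upwards [ae_restrict_mem measurableSet_Iic] with t ht
    rw [norm_mul, Real.norm_eq_abs (φ t ^ 2), abs_sq]
    linarith [mul_le_mul (hK t) (hC t s ht hs) (sq_nonneg _) hK0]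
  calc |∫ t in Iic s, γ t * φ t ^ 2|
      ≤ ∫ t in Iic s, Real.exp (μ * t) * (K * (C * Real.exp (-(μ * s)) * φ s ^ 2)) :=
        norm_integral_le_of_norm_le ((integrableOn_exp_mul_Iic hμ s).mul_const _) hle
    _ = Real.exp (μ * s) * Real.exp (-(μ * s)) * (K * C / μ * φ s ^ 2) := by
        rw [integral_mul_const, integral_exp_mul_Iic hμ]
        ring
    _ = K * C / μ * φ s ^ 2 := by rw [← Real.exp_add, add_neg_cancel, Real.exp_zero, one_mul]

lemma exists_abs_integral_Iic_le (h : IsGroundState V φ) (hγ : BddContDiff 0 γ)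
    (hzero : ∫ s, γ s * φ s ^ 2 = 0) :
    ∃ C, ∀ s, |∫ t in Iic s, γ t * φ t ^ 2| ≤ C * φ s ^ 2 := by
  obtain ⟨C₁, hC₁⟩ := h.exists_abs_integral_Iic_le_of_nonpos hγ
  obtain ⟨C₂, hC₂⟩ := h.comp_neg.exists_abs_integral_Iic_le_of_nonpos hγ.comp_neg
  refine ⟨max C₁ C₂, fun s => ?_⟩
  rcases le_total s 0 with hs | hs
  · exact (hC₁ s hs).trans (mul_le_mul_of_nonneg_right (le_max_left _ _) (sq_nonneg _))
  · have hreflect := integral_comp_neg_Iic (-s) fun t => γ t * φ t ^ 2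
    have hsplit := intervalIntegral.integral_Iic_add_Ioi (b := s) (μ := volume)
      (h.integrable_mul_sq hγ).integrableOn (h.integrable_mul_sq hγ).integrableOn
    rw [neg_neg] at hreflect
    rw [hzero] at hsplit
    rw [eq_neg_of_add_eq_zero_left hsplit, abs_neg, ← hreflect]
    have := hC₂ (-s) (by linarith)
    rw [neg_neg] at this
    exact this.trans (mul_le_mul_of_nonneg_right (le_max_right _ _) (sq_nonneg _))

lemma exists_neg_mul_le_of_nonpos (h : IsGroundState V φ) : ∃ C, ∀ s ≤ 0, -s * φ s ≤ C := by
  obtain ⟨C, μ, hμ, hC⟩ := h.exists_exp_decay_Iic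
  have hC0 : 0 ≤ C := by
    have := (h.pos 0).trans_le (hC 0 0 le_rfl le_rfl)
    simp only [sub_zero, mul_zero, Real.exp_zero, mul_one] at this
    exact (pos_of_mul_pos_left this (h.pos 0).le).le
  refine ⟨C * φ 0 / μ, fun s hs => ?_⟩
  have hexp : -(μ * s) * Real.exp (μ * s) ≤ 1 := by
    calc -(μ * s) * Real.exp (μ * s) ≤ Real.exp (-(μ * s)) * Real.exp (μ * s) := by
          gcongr
          linarith [Real.add_one_le_exp (-(μ * s))]
      _ = 1 := by rw [← Real.exp_add, neg_add_cancel, Real.exp_zero]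
  have hφ := hC s 0 hs le_rfl
  rw [sub_zero] at hφ
  rw [le_div_iff₀ hμ]
  calc -s * φ s * μ ≤ -s * (C * Real.exp (μ * s) * φ 0) * μ := by gcongr; linarith
    _ = C * φ 0 * (-(μ * s) * Real.exp (μ * s)) := by ring
    _ ≤ C * φ 0 := mul_le_of_le_one_right (mul_nonneg hC0 (h.pos 0).le) hexp

lemma exists_abs_mul_le (h : IsGroundState V φ) : ∃ C, ∀ s, |s| * φ s ≤ C := by
  obtain ⟨C₁, hC₁⟩ := h.exists_neg_mul_le_of_nonpos
  obtain ⟨C₂, hC₂⟩ := h.comp_neg.exists_neg_mul_le_of_nonpos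
  refine ⟨max C₁ C₂, fun s => ?_⟩
  rcases le_total s 0 with hs | hs
  · rw [abs_of_nonpos hs]
    exact (hC₁ s hs).trans (le_max_left _ _)
  · rw [abs_of_nonneg hs]
    have := hC₂ (-s) (by linarith)
    rw [neg_neg] at this
    exact this.trans (le_max_right _ _)

-- `J` decays like `φ ^ 2` at both ends because `∫ γ φ² = 0`, so `H` grows at most linearly.
lemma exists_hasDerivAt_div_sq (h : IsGroundState V φ) (hγ : BddContDiff 0 γ)
    (hzero : ∫ s, γ s * φ s ^ 2 = 0) :
    ∃ J H : ℝ → ℝ, (∀ s, HasDerivAt J (γ s * φ s ^ 2) s) ∧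
      (∀ s, HasDerivAt H (J s / φ s ^ 2) s) ∧ ∃ A, ∀ s, |H s| ≤ A * |s| := by
  have hφ_cont := h.bddContDiff.continuous
  have hγ_cont := hγ.continuous
  set J : ℝ → ℝ := fun s => ∫ t in Iic s, γ t * φ t ^ 2
  have hJ (s : ℝ) : HasDerivAt J (γ s * φ s ^ 2) s :=
    hasDerivAt_integral_Iic (by fun_prop) (fun s => (h.integrable_mul_sq hγ).integrableOn) s
  have hJ_cont : Continuous J := continuous_iff_continuousAt.2 fun s => (hJ s).continuousAt
  have hquot_cont := hJ_cont.div (hφ_cont.pow 2) fun s => (pow_pos (h.pos s) 2).ne'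
  obtain ⟨A, hA⟩ := h.exists_abs_integral_Iic_le hγ hzero
  refine ⟨J, fun s => ∫ t in 0..s, J t / φ t ^ 2, hJ,
    fun s => (hquot_cont.integral_hasStrictDerivAt 0 s).hasDerivAt, A, fun s => ?_⟩
  simpa using intervalIntegral.norm_integral_le_of_norm_le_const (a := 0) (b := s) (C := A)
    (f := fun t => J t / φ t ^ 2) fun t _ => by
      rw [norm_div, Real.norm_eq_abs, Real.norm_eq_abs, abs_sq, div_le_iff₀ (pow_pos (h.pos t) 2)]
      exact hA t

-- Reduction of order: the solution is `φ H`, with `H' = J / φ ^ 2` and `J' = γ φ ^ 2`.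
theorem exists_bddContDiff_iteratedDeriv_eq (h : IsGroundState V φ) (hγ : BddContDiff 0 γ)
    (hzero : ∫ s, γ s * φ s ^ 2 = 0) :
    ∃ R : ℝ → ℝ, BddContDiff 2 R ∧ ∀ s, iteratedDeriv 2 R s = V s * R s + φ s * γ s := by
  obtain ⟨J, H, hJ, hH, A, hA⟩ := h.exists_hasDerivAt_div_sq hγ hzero
  obtain ⟨B, hB⟩ := h.exists_abs_mul_le
  have hA0 : 0 ≤ A := by simpa using (abs_nonneg _).trans (hA 1)
  have hR (s : ℝ) : HasDerivAt (fun s => φ s * H s) (deriv φ s * H s + J s / φ s) s := by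
    refine ((h.bddContDiff.differentiable s).hasDerivAt.mul (hH s)).congr_deriv ?_
    field_simp [(h.pos s).ne']
  have hR' (s : ℝ) : HasDerivAt (fun s => deriv φ s * H s + J s / φ s)
      (V s * (φ s * H s) + φ s * γ s) s := by
    refine (((h.bddContDiff.hasDerivAt_deriv s).mul (hH s)).add ((hJ s).div
      (h.bddContDiff.differentiable s).hasDerivAt (h.pos s).ne')).congr_deriv ?_
    rw [h.iteratedDeriv_two_eq]
    field_simp [(h.pos s).ne']
    ring
  have hR_bdd : ∃ C, ∀ s, ‖φ s * H s‖ ≤ C := ⟨A * B, fun s => by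
    rw [norm_mul, Real.norm_eq_abs, Real.norm_eq_abs, abs_of_pos (h.pos s)]
    calc φ s * |H s| ≤ φ s * (A * |s|) := mul_le_mul_of_nonneg_left (hA s) (h.pos s).le
      _ = A * (|s| * φ s) := by ring
      _ ≤ A * B := mul_le_mul_of_nonneg_left (hB s) hA0⟩
  have hR_cont : Continuous fun s => φ s * H s :=
    continuous_iff_continuousAt.2 fun s => (hR s).continuousAt
  refine ⟨_, bddContDiff_two_of_hasDerivAt hR hR' hR_bdd ?_,
    congrFun (iteratedDeriv_two_of_hasDerivAt hR hR')⟩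
  exact (h.bddContDiff_potential.mul (bddContDiff_zero_iff.2 ⟨hR_cont, hR_bdd⟩)).add
    ((h.bddContDiff.of_le zero_le_two).mul hγ)

end IsGroundState

section Operator

variable {E : Type*} [NormedAddCommGroup E] [NormedSpace ℝ E] {d : ℕ} {P Q : ℝ × Euc d → ℝ}

lemma hasFDerivAt_fderiv_apply {f : E → ℝ} (hf : ContDiff ℝ 2 f) (v p : E) :
    HasFDerivAt (fun p => fderiv ℝ f p v) ((fderiv ℝ (fderiv ℝ f) p).flip v) p := by
  have hf' : ContDiff ℝ 1 (fderiv ℝ f) := hf.fderiv_right (by norm_num)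
  exact ((hf'.differentiable (by norm_num) p).hasFDerivAt.clm_apply
    (hasFDerivAt_const v p)).congr_fderiv (by simp)

lemma hasDerivAt_prodMk_left (s : ℝ) (y : E) :
    HasDerivAt (fun s : ℝ => (s, y)) ((1 : ℝ), (0 : E)) s :=
  (hasDerivAt_id s).prodMk (hasDerivAt_const s y)

lemma deriv_comp_prodMk_left (hP : Differentiable ℝ P) (s : ℝ) (y : Euc d) :
    deriv (fun s' => P (s', y)) s = fderiv ℝ P (s, y) (1, 0) :=
  ((hP (s, y)).hasFDerivAt.comp_hasDerivAt s (hasDerivAt_prodMk_left s y)).deriv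

lemma inner_gradient_comp_prodMk_right {s : ℝ} {y : Euc d} {L : ℝ × Euc d →L[ℝ] ℝ}
    (hP : HasFDerivAt P L (s, y)) (v : Euc d) :
    ⟪v, gradient (fun y' => P (s, y')) y⟫ = L (0, v) := by
  have h := (hP.comp y (hasFDerivAt_prodMk_right s y)).fderiv
  simp only [Function.comp_def] at h
  rw [real_inner_comm, inner_gradient_left, h]
  simp

lemma dSS_eq (hP : ContDiff ℝ 2 P) (s : ℝ) (y : Euc d) :
    dSS P s y = fderiv ℝ (fderiv ℝ P) (s, y) (1, 0) (1, 0) := by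
  simp only [dSS, deriv_comp_prodMk_left (hP.differentiable two_ne_zero)]
  exact ((hasFDerivAt_fderiv_apply hP (1, 0) (s, y)).comp_hasDerivAt s
    (hasDerivAt_prodMk_left s y)).deriv

lemma mixedDeriv_eq (e : Euc d) (hP : ContDiff ℝ 2 P) (s : ℝ) (y : Euc d) :
    mixedDeriv e P s y = fderiv ℝ (fderiv ℝ P) (s, y) (0, e) (1, 0) := by
  simp only [mixedDeriv, deriv_comp_prodMk_left (hP.differentiable two_ne_zero)]
  exact inner_gradient_comp_prodMk_right (hasFDerivAt_fderiv_apply hP (1, 0) (s, y)) e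

lemma lapY_eq (hP : ContDiff ℝ 2 P) (s : ℝ) (y : Euc d) :
    lapY P s y = ∑ i, fderiv ℝ (fderiv ℝ P) (s, y) (0, EuclideanSpace.basisFun (Fin d) ℝ i)
      (0, EuclideanSpace.basisFun (Fin d) ℝ i) := by
  have hslice : ContDiff ℝ 2 fun z => P (s, z) := hP.comp (contDiff_prodMk_right s)
  have hgrad : Differentiable ℝ (gradient fun z => P (s, z)) :=
    (InnerProductSpace.toDual ℝ (Euc d)).symm.toContinuousLinearEquiv.differentiable.comp
      ((hslice.fderiv_right (m := 1) (by norm_num)).differentiable (by norm_num))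
  have hdiag (v : Euc d) : ⟪v, fderiv ℝ (gradient fun z => P (s, z)) y v⟫ =
      fderiv ℝ (fderiv ℝ P) (s, y) (0, v) (0, v) := by
    have hcomp : (fun y' => ⟪v, gradient (fun z => P (s, z)) y'⟫) =
        fun y' => fderiv ℝ P (s, y') (0, v) := funext fun y' =>
      inner_gradient_comp_prodMk_right (hP.differentiable two_ne_zero (s, y')).hasFDerivAt v
    have hleft := (innerSL ℝ v).hasFDerivAt.comp y (hgrad y).hasFDerivAt
    have hright := (hasFDerivAt_fderiv_apply hP (0, v) (s, y)).comp y
      (hasFDerivAt_prodMk_right s y)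
    simp only [Function.comp_def, innerSL_apply_apply, hcomp] at hleft hright
    simpa using congrArg (fun L => L v) (hleft.unique hright)
  rw [lapY, clTrace, LinearMap.trace_eq_sum_inner _ (EuclideanSpace.basisFun (Fin d) ℝ)]
  exact Finset.sum_congr rfl fun i _ => hdiag _

/-- The operator `∂²_s + 2⟨e, D_y ∂_s⟩ + Δ_y`, that is `-𝒟_e*𝒟_e`. -/
def ellOp (e : Euc d) (P : ℝ × Euc d → ℝ) (s : ℝ) (y : Euc d) : ℝ :=
  dSS P s y + 2 * mixedDeriv e P s y + lapY P s y

lemma ellOp_add (e : Euc d) (hP : ContDiff ℝ 2 P) (hQ : ContDiff ℝ 2 Q) (s : ℝ) (y : Euc d) :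
    ellOp e (fun p => P p + Q p) s y = ellOp e P s y + ellOp e Q s y := by
  have hfderiv : fderiv ℝ (fun p => P p + Q p) = fun p => fderiv ℝ P p + fderiv ℝ Q p :=
    funext fun p => fderiv_fun_add (hP.differentiable two_ne_zero p)
      (hQ.differentiable two_ne_zero p)
  have hfderiv2 : fderiv ℝ (fderiv ℝ fun p => P p + Q p) (s, y) =
      fderiv ℝ (fderiv ℝ P) (s, y) + fderiv ℝ (fderiv ℝ Q) (s, y) := by
    rw [hfderiv]
    exact fderiv_fun_add
      ((hP.fderiv_right (m := 1) (by norm_num)).differentiable (by norm_num) (s, y))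
      ((hQ.fderiv_right (m := 1) (by norm_num)).differentiable (by norm_num) (s, y))
  simp only [ellOp, dSS_eq, mixedDeriv_eq, lapY_eq, hP, hQ, hP.add hQ, hfderiv2, add_apply,
    Finset.sum_add_distrib]
  ring

lemma hasFDerivAt_comp_mul_comp {a b : ℝ → ℝ} {a' b' : ℝ} {f g : E →L[ℝ] ℝ} {p : E}
    (ha : HasDerivAt a a' (f p)) (hb : HasDerivAt b b' (g p)) :
    HasFDerivAt (fun p => a (f p) * b (g p)) ((a (f p) * b') • g + (a' * b (g p)) • f) p := by
  refine ((ha.comp_hasFDerivAt p f.hasFDerivAt).mul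
    (hb.comp_hasFDerivAt p g.hasFDerivAt)).congr_fderiv ?_
  ext v
  simp only [Function.comp_apply, add_apply, smul_apply, smul_eq_mul]
  ring

lemma fderiv_fderiv_comp_mul_comp {a b : ℝ → ℝ} (ha : ContDiff ℝ 2 a) (hb : ContDiff ℝ 2 b)
    (f g : E →L[ℝ] ℝ) (p v w : E) :
    fderiv ℝ (fderiv ℝ fun p => a (f p) * b (g p)) p v w =
      iteratedDeriv 2 a (f p) * b (g p) * (f v * f w) +
      deriv a (f p) * deriv b (g p) * (f v * g w + g v * f w) +
      a (f p) * iteratedDeriv 2 b (g p) * (g v * g w) := by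
  have ha' (t : ℝ) : HasDerivAt a (deriv a t) t := (ha.differentiable two_ne_zero t).hasDerivAt
  have hb' (t : ℝ) : HasDerivAt b (deriv b t) t := (hb.differentiable two_ne_zero t).hasDerivAt
  have hfderiv : fderiv ℝ (fun p => a (f p) * b (g p)) =
      fun p => (a (f p) * deriv b (g p)) • g + (deriv a (f p) * b (g p)) • f := funext fun p =>
    (hasFDerivAt_comp_mul_comp (ha' _) (hb' _)).fderiv
  rw [hfderiv, (((hasFDerivAt_comp_mul_comp (ha' _)
    (hasDerivAt_deriv_of_contDiff_two hb _)).smul_const g).fun_add ((hasFDerivAt_comp_mul_comp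
    (hasDerivAt_deriv_of_contDiff_two ha _) (hb' _)).smul_const f)).fderiv]
  simp only [add_apply, ContinuousLinearMap.smulRight_apply, smul_apply, smul_eq_mul]
  ring

/-- The phase `⟨K, y - s e⟩` of a plane wave travelling with the front: `∂_s + ⟨e, D_y⟩` annihilates
every function of it. -/
def phase (e K : Euc d) : ℝ × Euc d →L[ℝ] ℝ :=
  (innerSL ℝ K).comp
    (ContinuousLinearMap.snd ℝ ℝ (Euc d) - (ContinuousLinearMap.fst ℝ ℝ (Euc d)).smulRight e)

@[simp]
lemma phase_apply (e K : Euc d) (s : ℝ) (y : Euc d) : phase e K (s, y) = ⟪K, y⟫ - s * ⟪K, e⟫ := by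
  simp [phase]

lemma ellOp_mul_comp_phase (e K : Euc d) {a b : ℝ → ℝ} (ha : ContDiff ℝ 2 a)
    (hb : ContDiff ℝ 2 b) (s : ℝ) (y : Euc d) :
    ellOp e (fun p => a p.1 * b (phase e K p)) s y =
      iteratedDeriv 2 a s * b (phase e K (s, y)) +
      (‖K‖ ^ 2 - ⟪K, e⟫ ^ 2) * (a s * iteratedDeriv 2 b (phase e K (s, y))) := by
  have hsmooth : ContDiff ℝ 2 fun p => a p.1 * b (phase e K p) :=
    (ha.comp contDiff_fst).mul (hb.comp (phase e K).contDiff)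
  have hfderiv2 (v w : ℝ × Euc d) := fderiv_fderiv_comp_mul_comp ha hb
    (ContinuousLinearMap.fst ℝ ℝ (Euc d)) (phase e K) (s, y) v w
  simp only [ContinuousLinearMap.coe_fst'] at hfderiv2
  have hparseval : ∑ i, ⟪K, EuclideanSpace.basisFun (Fin d) ℝ i⟫ *
      ⟪K, EuclideanSpace.basisFun (Fin d) ℝ i⟫ = ‖K‖ ^ 2 := by
    rw [← real_inner_self_eq_norm_sq, ← (EuclideanSpace.basisFun (Fin d) ℝ).sum_inner_mul_inner]
    exact Finset.sum_congr rfl fun i _ => by rw [real_inner_comm K]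
  rw [ellOp, dSS_eq hsmooth, mixedDeriv_eq e hsmooth, lapY_eq hsmooth]
  simp only [hfderiv2, phase_apply, inner_zero_right, zero_mul, mul_zero, add_zero, zero_add,
    sub_zero, zero_sub, one_mul, mul_one]
  rw [← Finset.mul_sum, hparseval]
  ring

end Operator

lemma bddContDiff_cos (n : ℕ) : BddContDiff n Real.cos :=
  ⟨Real.contDiff_cos, 1, fun k _ x => by
    rw [norm_iteratedFDeriv_eq_norm_iteratedDeriv]
    exact Real.abs_iteratedDeriv_cos_le_one k x⟩

lemma bddContDiff_sin (n : ℕ) : BddContDiff n Real.sin :=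
  ⟨Real.contDiff_sin, 1, fun k _ x => by
    rw [norm_iteratedFDeriv_eq_norm_iteratedDeriv]
    exact Real.abs_iteratedDeriv_sin_le_one k x⟩

section Corrector

variable {d : ℕ} {e : Euc d} {V : ℝ → ℝ} {f g : ℝ → Euc d → ℝ}

/-- The source `f` admits a corrector: the equation `-𝒟_e*𝒟_e P = V P + f` has a solution `P` in
`C_b^2` that is periodic in `y`. -/
def HasCorrector (e : Euc d) (V : ℝ → ℝ) (f : ℝ → Euc d → ℝ) : Prop :=
  ∃ P : ℝ × Euc d → ℝ, (∀ (s : ℝ) (y z : Euc d), IsIntVec z → P (s, y + z) = P (s, y)) ∧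
    BddContDiff 2 P ∧ ∀ s y, ellOp e P s y = V s * P (s, y) + f s y

namespace HasCorrector

lemma add (hf : HasCorrector e V f) (hg : HasCorrector e V g) :
    HasCorrector e V fun s y => f s y + g s y := by
  obtain ⟨P, hP, hP2, hPf⟩ := hf
  obtain ⟨Q, hQ, hQ2, hQg⟩ := hg
  refine ⟨fun p => P p + Q p, fun s y z hz => by simp only [hP s y z hz, hQ s y z hz], hP2.add hQ2,
    fun s y => ?_⟩
  rw [ellOp_add e hP2.1 hQ2.1, hPf, hQg]
  ring

lemma of_profile {K : Euc d} {R γ ψ : ℝ → ℝ} (hR : BddContDiff 2 R)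
    (hRγ : ∀ s, iteratedDeriv 2 R s = (V s + (‖K‖ ^ 2 - ⟪K, e⟫ ^ 2)) * R s + γ s)
    (hψ : BddContDiff 2 ψ) (hψ2 : ∀ t, iteratedDeriv 2 ψ t = -ψ t)
    (hper : ∀ z : Euc d, IsIntVec z → Function.Periodic ψ ⟪K, z⟫) :
    HasCorrector e V fun s y => γ s * ψ (phase e K (s, y)) := by
  refine ⟨fun p => R p.1 * ψ (phase e K p), fun s y z hz => ?_,
    (hR.comp_continuousLinearMap (ContinuousLinearMap.fst ℝ ℝ (Euc d))).mul
      (hψ.comp_continuousLinearMap (phase e K)), fun s y => ?_⟩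
  · simp only [phase_apply, inner_add_right, add_sub_right_comm, hper z hz _]
  · rw [ellOp_mul_comp_phase e K hR.1 hψ.1, hRγ, hψ2]
    ring

lemma zero : HasCorrector e V fun _ _ => 0 := by
  simpa using of_profile (e := e) (V := V) (K := 0) (γ := fun _ => 0) (bddContDiff_const 0)
    (by simp) (bddContDiff_cos 2) (by simp) (by simp [Function.Periodic])

lemma sum {ι : Type*} {S : Finset ι} {F : ι → ℝ → Euc d → ℝ}
    (hF : ∀ i ∈ S, HasCorrector e V (F i)) : HasCorrector e V fun s y => ∑ i ∈ S, F i s y := by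
  induction S using Finset.cons_induction with
  | empty => simpa using zero
  | cons i S hi ih =>
    simp only [Finset.sum_cons]
    exact (hF i (Finset.mem_cons_self i S)).add (ih fun j hj => hF j (Finset.mem_cons_of_mem hj))

end HasCorrector

/-- The frequency vector `2πk` of the `ℤ^d`-periodic Fourier mode of index `k`. -/
def freq (k : Fin d → ℤ) : Euc d := WithLp.toLp 2 fun i => 2 * Real.pi * k i

@[simp]
lemma freq_zero : freq (0 : Fin d → ℤ) = 0 := by
  ext i
  simp [freq]

lemma inner_freq (k : Fin d → ℤ) (y : Euc d) : ⟪freq k, y⟫ = ∑ i, 2 * Real.pi * k i * y i := by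
  simp only [freq, PiLp.inner_apply, RCLike.inner_apply, conj_trivial, mul_comm]

lemma exists_inner_freq_eq_int_mul (k : Fin d → ℤ) {z : Euc d} (hz : IsIntVec z) :
    ∃ n : ℤ, ⟪freq k, z⟫ = n * (2 * Real.pi) := by
  choose n hn using hz
  refine ⟨∑ i, k i * n i, ?_⟩
  rw [inner_freq, Int.cast_sum, Finset.sum_mul]
  refine Finset.sum_congr rfl fun i _ => ?_
  rw [hn, Int.cast_mul]
  ring

lemma sq_inner_freq_lt_sq_norm (he : ‖e‖ = 1) (hirr : ¬ RatDir e) {k : Fin d → ℤ} (hk : k ≠ 0) :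
    ⟪freq k, e⟫ ^ 2 < ‖freq k‖ ^ 2 := by
  have hpythagoras : ‖freq k - ⟪freq k, e⟫ • e‖ ^ 2 = ‖freq k‖ ^ 2 - ⟪freq k, e⟫ ^ 2 := by
    rw [norm_sub_sq_real, inner_smul_right, norm_smul, he, Real.norm_eq_abs, mul_one, sq_abs]
    ring
  rw [← sub_pos, ← hpythagoras]
  refine pow_pos (norm_pos_iff.2 fun hparallel => ?_) 2
  have hcoord (i : Fin d) : 2 * Real.pi * k i = ⟪freq k, e⟫ * e i :=
    congrArg (fun v : Euc d => v i) (sub_eq_zero.1 hparallel)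
  have hinner : ⟪freq k, e⟫ ≠ 0 := fun h0 => hk <| funext fun i => by
    simpa [h0, Real.pi_ne_zero] using hcoord i
  refine hirr ⟨⟪freq k, e⟫⁻¹ * (2 * Real.pi), k, fun i => ?_⟩
  rw [mul_assoc, hcoord, inv_mul_cancel_left₀ hinner]

namespace IsGroundState

variable {φ α β γ : ℝ → ℝ}

lemma hasCorrector_of_integral_eq_zero (h : IsGroundState V φ) (hγ : BddContDiff 0 γ)
    (hzero : ∫ s, γ s * φ s ^ 2 = 0) : HasCorrector e V fun s _ => φ s * γ s := by
  obtain ⟨R, hR, hRγ⟩ := h.exists_bddContDiff_iteratedDeriv_eq hγ hzero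
  have hconst := HasCorrector.of_profile (e := e) (K := 0) hR (by simpa using hRγ)
    (bddContDiff_cos 2) (by simp) (by simp [Function.Periodic])
  simpa using hconst

lemma hasCorrector_mode (h : IsGroundState V φ) (he : ‖e‖ = 1) (hirr : ¬ RatDir e)
    {k : Fin d → ℤ} (hk : k ≠ 0) (hα : BddContDiff 0 α) (hβ : BddContDiff 0 β) :
    HasCorrector e V fun s y =>
      φ s * (α s * Real.cos ⟪freq k, y⟫ + β s * Real.sin ⟪freq k, y⟫) := by
  set ω := ⟪freq k, e⟫
  have hprofile {γ : ℝ → ℝ} (hγ : BddContDiff 0 γ) :=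
    exists_bddContDiff_iteratedDeriv_eq_of_supersolution h.bddContDiff h.pos
      (h.bddContDiff_potential.add (bddContDiff_const _))
      (sub_pos.2 (sq_inner_freq_lt_sq_norm he hirr hk))
      (fun s => by rw [add_sub_cancel_right, h.iteratedDeriv_two_eq]) hγ
  have hc := (bddContDiff_cos 0).comp_continuousLinearMap (ContinuousLinearMap.mul ℝ ℝ ω)
  have hs := (bddContDiff_sin 0).comp_continuousLinearMap (ContinuousLinearMap.mul ℝ ℝ ω)
  obtain ⟨R, hR, hReq⟩ := hprofile ((hα.mul hc).add (hβ.mul hs))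
  obtain ⟨Q, hQ, hQeq⟩ := hprofile ((hβ.mul hc).sub (hα.mul hs))
  have hcos := HasCorrector.of_profile hR hReq (bddContDiff_cos 2) (by simp) fun z hz t => by
    obtain ⟨n, hn⟩ := exists_inner_freq_eq_int_mul k hz
    rw [hn, Real.cos_add_int_mul_two_pi]
  have hsin := HasCorrector.of_profile hQ hQeq (bddContDiff_sin 2) (by simp) fun z hz t => by
    obtain ⟨n, hn⟩ := exists_inner_freq_eq_int_mul k hz
    rw [hn, Real.sin_add_int_mul_two_pi]
  convert hcos.add hsin using 3 with s y
  have hsplit : ⟪freq k, y⟫ = phase e (freq k) (s, y) + ω * s := by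
    rw [phase_apply]
    ring
  rw [hsplit, Real.cos_add, Real.sin_add]
  simp only [ContinuousLinearMap.mul_apply']
  ring

end IsGroundState

end Corrector

section Fourier

lemma exists_span_mFourier_approx {ι : Type*} [Fintype ι] {g : (ι → ℝ) → ℂ} (hg : Continuous g)
    (hper : ∀ (x : ι → ℝ) (n : ι → ℤ), g (x + fun i => (n i : ℝ)) = g x) {ε : ℝ} (hε : 0 < ε) :
    ∃ f ∈ Submodule.span ℂ (range (UnitAddTorus.mFourier (d := ι))),
      ∀ x : ι → ℝ, ‖g x - f fun i => (x i : UnitAddCircle)‖ < ε := by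
  have hopen : IsOpenQuotientMap (Pi.map fun (_ : ι) (t : ℝ) => (t : UnitAddCircle)) :=
    .piMap fun _ => QuotientAddGroup.isOpenQuotientMap_mk
  let π : C(ι → ℝ, UnitAddTorus ι) := ⟨_, hopen.continuous⟩
  have hπ : IsQuotientMap π := hopen.isQuotientMap
  have hfactors : Function.FactorsThrough (⟨g, hg⟩ : C(ι → ℝ, ℂ)) π := fun x y hxy => by
    have hint (i : ι) : ∃ n : ℤ, (n : ℝ) = x i - y i := by
      obtain ⟨n, hn⟩ := AddSubgroup.mem_zmultiples_iff.1
        (QuotientAddGroup.eq_iff_sub_mem.1 (congrFun hxy i))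
      exact ⟨n, by simpa using hn⟩
    choose n hn using hint
    have hx : x = y + fun i => (n i : ℝ) := funext fun i => by simp [hn]
    rw [hx]
    exact hper y n
  have hclosure : hπ.lift ⟨g, hg⟩ hfactors ∈ closure
      (Submodule.span ℂ (range (UnitAddTorus.mFourier (d := ι))) : Set C(UnitAddTorus ι, ℂ)) := by
    rw [← Submodule.topologicalClosure_coe, UnitAddTorus.span_mFourier_closure_eq_top]
    trivial
  obtain ⟨f, hf, hfg⟩ := Metric.mem_closure_iff.1 hclosure ε hε
  refine ⟨f, hf, fun x => ?_⟩
  have hlift : g x = hπ.lift ⟨g, hg⟩ hfactors (π x) :=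
    (DFunLike.congr_fun (hπ.lift_comp ⟨g, hg⟩ hfactors) x).symm
  rw [hlift, ← dist_eq_norm]
  exact (ContinuousMap.dist_apply_le_dist _).trans_lt hfg

lemma mFourier_coe {ι : Type*} [Fintype ι] (n : ι → ℤ) (x : ι → ℝ) :
    UnitAddTorus.mFourier n (fun i => (x i : UnitAddCircle)) =
      Complex.exp ((∑ i, 2 * Real.pi * n i * x i : ℝ) * Complex.I) := by
  rw [Complex.ofReal_sum, Finset.sum_mul, Complex.exp_sum]
  refine Finset.prod_congr rfl fun i _ => ?_
  rw [fourier_coe_apply]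
  congr 1
  push_cast
  ring

lemma exists_trigPoly_approx {ι : Type*} [Fintype ι] {g : (ι → ℝ) → ℝ} (hg : Continuous g)
    (hper : ∀ (x : ι → ℝ) (n : ι → ℤ), g (x + fun i => (n i : ℝ)) = g x) {ε : ℝ} (hε : 0 < ε) :
    ∃ (S : Finset (ι → ℤ)) (a b : (ι → ℤ) → ℝ), ∀ x : ι → ℝ,
      |g x - ∑ n ∈ S, (a n * Real.cos (∑ i, 2 * Real.pi * n i * x i) +
        b n * Real.sin (∑ i, 2 * Real.pi * n i * x i))| ≤ ε := by
  obtain ⟨f, hf, hfg⟩ := exists_span_mFourier_approx (g := fun x => (g x : ℂ))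
    (Complex.continuous_ofReal.comp hg) (fun x n => by rw [hper]) hε
  obtain ⟨c, rfl⟩ := Finsupp.mem_span_range_iff_exists_finsupp.1 hf
  refine ⟨c.support, fun n => (c n).re, fun n => -(c n).im, fun x => ?_⟩
  have hre := (Complex.abs_re_le_norm _).trans (hfg x).le
  simpa only [Finsupp.sum, ContinuousMap.coe_sum, ContinuousMap.coe_smul, Finset.sum_apply,
    Pi.smul_apply, mFourier_coe, smul_eq_mul, Complex.sub_re, Complex.ofReal_re, Complex.re_sum,
    Complex.mul_re, Complex.exp_ofReal_mul_I_re, Complex.exp_ofReal_mul_I_im, neg_mul,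
    ← sub_eq_add_neg] using hre

variable {d : ℕ}

lemma unitCube_eq_preimage :
    unitCube d = WithLp.ofLp ⁻¹' (univ.pi fun _ : Fin d => Icc (0 : ℝ) 1) := by
  ext y
  simp only [unitCube, mem_ofPred_eq, mem_preimage, mem_univ_pi]

lemma isCompact_unitCube : IsCompact (unitCube d) := by
  rw [unitCube_eq_preimage]
  exact (PiLp.homeomorph 2 fun _ : Fin d => ℝ).isCompact_preimage.2
    (isCompact_univ_pi fun _ => isCompact_Icc)

lemma setIntegral_unitCube_prod (g : Fin d → ℝ → ℂ) :
    ∫ y in unitCube d, ∏ i, g i (y i) = ∏ i, ∫ t in (0 : ℝ)..1, g i t := by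
  rw [unitCube_eq_preimage, (PiLp.volume_preserving_ofLp (Fin d)).setIntegral_preimage_emb
    (MeasurableEquiv.toLp 2 (Fin d → ℝ)).symm.measurableEmbedding fun x => ∏ i, g i (x i),
    volume_pi, Measure.restrict_pi_pi, integral_fintype_prod_eq_prod]
  refine Finset.prod_congr rfl fun i _ => ?_
  rw [intervalIntegral.integral_of_le zero_le_one, integral_Icc_eq_integral_Ioc]

lemma volume_real_unitCube : volume.real (unitCube d) = 1 := by
  simpa using setIntegral_unitCube_prod fun (_ : Fin d) (_ : ℝ) => (1 : ℂ)

lemma abs_setIntegral_unitCube_le {g : Euc d → ℝ} {C : ℝ} (hg : ∀ y, |g y| ≤ C) :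
    |∫ y in unitCube d, g y| ≤ C := by
  have hbound := norm_setIntegral_le_of_norm_le_const (μ := volume) (f := g)
    isCompact_unitCube.measure_lt_top fun y _ => hg y
  rwa [volume_real_unitCube, mul_one] at hbound

lemma intervalIntegral_exp_two_pi_int {k : ℤ} (hk : k ≠ 0) :
    ∫ t in (0 : ℝ)..1, Complex.exp (2 * Real.pi * Complex.I * k * t) = 0 := by
  have hexp : Complex.exp (2 * Real.pi * Complex.I * k) = 1 := by
    rw [mul_comm]
    exact Complex.exp_int_mul_two_pi_mul_I k
  rw [integral_exp_mul_complex (mul_ne_zero Complex.two_pi_I_ne_zero (Int.cast_ne_zero.2 hk))]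
  simp [hexp]

lemma setIntegral_unitCube_exp_inner_freq {k : Fin d → ℤ} (hk : k ≠ 0) :
    ∫ y in unitCube d, Complex.exp ((⟪freq k, y⟫ : ℝ) * Complex.I) = 0 := by
  have hprod (y : Euc d) : Complex.exp ((⟪freq k, y⟫ : ℝ) * Complex.I) =
      ∏ i, Complex.exp (2 * Real.pi * Complex.I * k i * y i) := by
    rw [inner_freq, Complex.ofReal_sum, Finset.sum_mul, Complex.exp_sum]
    refine Finset.prod_congr rfl fun i _ => congrArg _ ?_
    push_cast
    ring
  obtain ⟨i, hi⟩ := Function.ne_iff.1 hk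
  simp_rw [hprod]
  rw [setIntegral_unitCube_prod fun i t => Complex.exp (2 * Real.pi * Complex.I * k i * t)]
  exact Finset.prod_eq_zero (Finset.mem_univ i) (intervalIntegral_exp_two_pi_int hi)

lemma setIntegral_unitCube_mode {k : Fin d → ℤ} (hk : k ≠ 0) (a b : ℝ) :
    ∫ y in unitCube d, (a * Real.cos ⟪freq k, y⟫ + b * Real.sin ⟪freq k, y⟫) = 0 := by
  have hre (y : Euc d) : a * Real.cos ⟪freq k, y⟫ + b * Real.sin ⟪freq k, y⟫ =
      ((⟨a, -b⟩ : ℂ) * Complex.exp ((⟪freq k, y⟫ : ℝ) * Complex.I)).re := by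
    rw [Complex.mul_re, Complex.exp_ofReal_mul_I_re, Complex.exp_ofReal_mul_I_im]
    ring
  have hint : IntegrableOn (fun y => (⟨a, -b⟩ : ℂ) *
      Complex.exp ((⟪freq k, y⟫ : ℝ) * Complex.I)) (unitCube d) :=
    ContinuousOn.integrableOn_compact isCompact_unitCube (by fun_prop)
  simp_rw [hre]
  refine (integral_re hint).trans ?_
  rw [integral_const_mul, setIntegral_unitCube_exp_inner_freq hk, mul_zero, map_zero]

lemma exists_trigPoly_approx_prod {g : ℝ → Euc d → ℝ} (hg : Continuous (Function.uncurry g))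
    (hper : ∀ t, Function.Periodic (g · t) 1)
    (hper' : ∀ t y z, IsIntVec z → g t (y + z) = g t y) {ε : ℝ} (hε : 0 < ε) :
    ∃ (S : Finset (Option (Fin d) → ℤ)) (a b : (Option (Fin d) → ℤ) → ℝ), ∀ t y,
      |g t y - ∑ n ∈ S, (a n * Real.cos (2 * Real.pi * n none * t + ⟪freq (n ∘ some), y⟫) +
        b n * Real.sin (2 * Real.pi * n none * t + ⟪freq (n ∘ some), y⟫))| ≤ ε := by
  let G : (Option (Fin d) → ℝ) → ℝ := fun x => g (x none) (WithLp.toLp 2 (x ∘ some))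
  have hG : Continuous G := hg.comp
    (f := fun x : Option (Fin d) → ℝ => (x none, WithLp.toLp 2 (x ∘ some))) (by fun_prop)
  have hGper (x : Option (Fin d) → ℝ) (n : Option (Fin d) → ℤ) :
      G (x + fun i => (n i : ℝ)) = G x := by
    have hfirst := (hper (WithLp.toLp 2 (x ∘ some))).int_mul (n none) (x none)
    rw [mul_one] at hfirst
    exact (hper' _ _ (WithLp.toLp 2 fun i => (n (some i) : ℝ)) fun i => ⟨n (some i), rfl⟩).trans
      hfirst
  obtain ⟨S, a, b, hS⟩ := exists_trigPoly_approx hG hGper hε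
  refine ⟨S, a, b, fun t y => ?_⟩
  have hbound := hS fun o => o.elim t y
  simp only [Fintype.sum_option] at hbound
  simp only [inner_freq]
  exact hbound

-- The values of `φ` are parametrized by a circle, `φ s = B sin (2π t)`, so that Fourier
-- approximation of `F (B sin (2π t)) y` on the torus of dimension `d + 1` applies.
lemma exists_modes_approx {F : ℝ → Euc d → ℝ} (hF : Continuous (Function.uncurry F))
    (hper : ∀ r y z, IsIntVec z → F r (y + z) = F r y) {φ : ℝ → ℝ} (hφ : BddContDiff 0 φ)
    {ε : ℝ} (hε : 0 < ε) :
    ∃ (S : Finset (Option (Fin d) → ℤ)) (α β : (Option (Fin d) → ℤ) → ℝ → ℝ),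
      (∀ n, BddContDiff 0 (α n)) ∧ (∀ n, BddContDiff 0 (β n)) ∧
      ∀ s y, |F (φ s) y - ∑ n ∈ S, (α n s * Real.cos ⟪freq (n ∘ some), y⟫ +
        β n s * Real.sin ⟪freq (n ∘ some), y⟫)| ≤ ε := by
  obtain ⟨B, hB, hφB⟩ : ∃ B > 0, ∀ s, |φ s| ≤ B := by
    obtain ⟨B, hB⟩ := hφ.exists_norm_le
    exact ⟨max B 1, by positivity, fun s => (hB s).trans (le_max_left _ _)⟩
  obtain ⟨S, a, b, hS⟩ := exists_trigPoly_approx_prod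
    (g := fun t => F (B * Real.sin (2 * Real.pi * t)))
    (hF.comp (f := fun p : ℝ × Euc d => (B * Real.sin (2 * Real.pi * p.1), p.2)) (by fun_prop))
    (fun y t => by simp only [mul_add, mul_one, Real.sin_add_two_pi]) (fun t => hper _) hε
  let τ : ℝ → ℝ := fun s => Real.arcsin (φ s / B) / (2 * Real.pi)
  have hτ (s : ℝ) : B * Real.sin (2 * Real.pi * τ s) = φ s := by
    have hle := abs_le.1 (hφB s)
    rw [mul_div_cancel₀ _ (by positivity), Real.sin_arcsin, mul_div_cancel₀ _ hB.ne']
    · rw [le_div_iff₀ hB]; linarith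
    · rw [div_le_iff₀ hB]; linarith
  have hcont := hφ.continuous
  have hcos (k : ℝ) : BddContDiff 0 fun s => Real.cos (2 * Real.pi * k * τ s) :=
    bddContDiff_zero_iff.2 ⟨by fun_prop, 1, fun s => Real.abs_cos_le_one _⟩
  have hsin (k : ℝ) : BddContDiff 0 fun s => Real.sin (2 * Real.pi * k * τ s) :=
    bddContDiff_zero_iff.2 ⟨by fun_prop, 1, fun s => Real.abs_sin_le_one _⟩
  refine ⟨S, fun n s => a n * Real.cos (2 * Real.pi * n none * τ s) +
      b n * Real.sin (2 * Real.pi * n none * τ s),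
    fun n s => b n * Real.cos (2 * Real.pi * n none * τ s) -
      a n * Real.sin (2 * Real.pi * n none * τ s),
    fun n => ((hcos _).const_mul _).add ((hsin _).const_mul _),
    fun n => ((hcos _).const_mul _).sub ((hsin _).const_mul _), fun s y => ?_⟩
  have hsum := hS (τ s) y
  rw [hτ] at hsum
  convert hsum using 4 with n
  rw [Real.cos_add, Real.sin_add]
  ring

lemma exists_nonzero_modes_approx {F : ℝ → Euc d → ℝ} (hF : Continuous (Function.uncurry F))
    (hper : ∀ r y z, IsIntVec z → F r (y + z) = F r y) {φ : ℝ → ℝ} (hφ : BddContDiff 0 φ)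
    {ε : ℝ} (hε : 0 < ε) :
    ∃ (S : Finset (Option (Fin d) → ℤ)) (α β : (Option (Fin d) → ℤ) → ℝ → ℝ),
      (∀ n ∈ S, n ∘ some ≠ 0) ∧ (∀ n, BddContDiff 0 (α n)) ∧ (∀ n, BddContDiff 0 (β n)) ∧
      ∀ s y, |F (φ s) y - (∫ y' in unitCube d, F (φ s) y') -
        ∑ n ∈ S, (α n s * Real.cos ⟪freq (n ∘ some), y⟫ +
          β n s * Real.sin ⟪freq (n ∘ some), y⟫)| ≤ ε := by
  obtain ⟨S, α, β, hα, hβ, hS⟩ := exists_modes_approx hF hper hφ (half_pos hε)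
  refine ⟨{n ∈ S | n ∘ some ≠ 0}, α, β, fun n hn => (Finset.mem_filter.1 hn).2, hα, hβ,
    fun s y => ?_⟩
  set M : (Option (Fin d) → ℤ) → Euc d → ℝ := fun n y =>
    α n s * Real.cos ⟪freq (n ∘ some), y⟫ + β n s * Real.sin ⟪freq (n ∘ some), y⟫ with hM
  have hMcont (n) : Continuous (M n) := by fun_prop
  have hMint (n) : IntegrableOn (M n) (unitCube d) :=
    (hMcont n).continuousOn.integrableOn_compact isCompact_unitCube
  have hFint : IntegrableOn (F (φ s)) (unitCube d) :=
    (hF.comp (Continuous.prodMk_right (φ s))).continuousOn.integrableOn_compact isCompact_unitCube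
  have hmean : ∫ y' in unitCube d, ∑ n ∈ S, M n y' = ∑ n ∈ S with n ∘ some = 0, M n y := by
    rw [integral_finsetSum _ fun n _ => hMint n, Finset.sum_filter]
    refine Finset.sum_congr rfl fun n _ => ?_
    split_ifs with hn
    · simp [hM, hn, volume_real_unitCube]
    · exact setIntegral_unitCube_mode hn _ _
  have hintegral : |∫ y' in unitCube d, (F (φ s) y' - ∑ n ∈ S, M n y')| ≤ ε / 2 :=
    abs_setIntegral_unitCube_le (hS s)
  rw [integral_sub hFint (integrable_finsetSum _ fun n _ => hMint n), hmean] at hintegral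
  have hsplit := Finset.sum_filter_add_sum_filter_not S (fun n => n ∘ some = 0) fun n => M n y
  have hpoint := hS s y
  rw [← hsplit] at hpoint
  rw [abs_le] at *
  constructor <;> linarith

end Fourier

namespace IsGroundState

variable {d : ℕ} {e : Euc d} {V φ : ℝ → ℝ} {F : ℝ → Euc d → ℝ}

lemma integral_sq_pos (h : IsGroundState V φ) : 0 < ∫ s, φ s ^ 2 :=
  integral_pos_of_integrable_nonneg_nonzero (x := 0) (h.bddContDiff.continuous.pow 2)
    h.integrable_sq (fun s => sq_nonneg (φ s)) (pow_pos (h.pos 0) 2).ne'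

-- The subtracted constant makes the source orthogonal to `φ`, which spans the kernel of
-- `-∂²_s + V` on bounded functions.
lemma hasCorrector_average (h : IsGroundState V φ) (hF : Continuous (Function.uncurry F)) :
    HasCorrector e V fun s _ => φ s * ((∫ y in unitCube d, F (φ s) y) -
      (∫ s, ∫ y in unitCube d, F (φ s) y * φ s ^ 2) / ∫ s, φ s ^ 2) := by
  have havg : BddContDiff 0 fun s => ∫ y in unitCube d, F (φ s) y :=
    h.bddContDiff.continuous_comp
      (continuous_parametric_integral_of_continuous hF isCompact_unitCube)
  refine h.hasCorrector_of_integral_eq_zero (havg.sub (bddContDiff_const _)) ?_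
  simp_rw [sub_mul, integral_mul_const]
  rw [integral_sub (h.integrable_mul_sq havg) (h.integrable_sq.const_mul _), integral_const_mul,
    div_mul_cancel₀ _ h.integral_sq_pos.ne', sub_self]

theorem exists_approx_corrector (h : IsGroundState V φ) (hF : Continuous (Function.uncurry F))
    (hper : ∀ r y z, IsIntVec z → F r (y + z) = F r y) (he : ‖e‖ = 1) (hirr : ¬ RatDir e)
    {ν : ℝ} (hν : 0 < ν) :
    ∃ P : ℝ × Euc d → ℝ, (∀ (s : ℝ) (y z : Euc d), IsIntVec z → P (s, y + z) = P (s, y)) ∧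
      BddContDiff 2 P ∧ ∀ s y,
        |(F (φ s) y - (∫ s, ∫ y in unitCube d, F (φ s) y * φ s ^ 2) / ∫ s, φ s ^ 2) * φ s
          - ellOp e P s y + V s * P (s, y)| ≤ ν * φ s := by
  obtain ⟨S, α, β, hS, hα, hβ, happrox⟩ :=
    exists_nonzero_modes_approx hF hper (h.bddContDiff.of_le zero_le_two) hν
  have hmodes := HasCorrector.sum fun n hn => h.hasCorrector_mode he hirr (hS n hn) (hα n) (hβ n)
  obtain ⟨P, hPper, hP, hPeq⟩ := hmodes.add (h.hasCorrector_average hF)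
  refine ⟨P, hPper, hP, fun s y => ?_⟩
  simp only [hPeq, ← Finset.mul_sum]
  have hscaled := mul_le_mul_of_nonneg_left (happrox s y) (h.pos s).le
  rw [← abs_of_pos (h.pos s), ← abs_mul, abs_of_pos (h.pos s), mul_comm _ ν] at hscaled
  refine (congrArg abs ?_).trans_le hscaled
  ring

end IsGroundState

namespace StandingWave

variable {W q : ℝ → ℝ}

lemma hasDerivAt (hq : StandingWave W q) (s : ℝ) : HasDerivAt q (deriv q s) s :=
  (hq.1.differentiable two_ne_zero s).hasDerivAt

lemma hasDerivAt_deriv (hq : StandingWave W q) (s : ℝ) :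
    HasDerivAt (deriv q) (deriv W (q s)) s := by
  rw [← hq.2.2.2.2.1]
  exact ((contDiff_succ_iff_deriv.1 hq.1).2.2.differentiable one_ne_zero s).hasDerivAt

lemma exists_norm_le (hq : StandingWave W q) : ∃ C, ∀ s, ‖q s‖ ≤ C :=
  ⟨1, fun s => abs_le.2 ⟨(hq.2.2.1 s).1.le, (hq.2.2.1 s).2.le⟩⟩

lemma bddContDiff_zero (hq : StandingWave W q) : BddContDiff 0 q :=
  bddContDiff_zero_iff.2 ⟨hq.1.continuous, hq.exists_norm_le⟩

lemma exists_norm_deriv_le (hq : StandingWave W q) (hW : Continuous (deriv W)) :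
    ∃ C, ∀ s, ‖deriv q s‖ ≤ C :=
  (bddContDiff_two_of_hasDerivAt hq.hasDerivAt hq.hasDerivAt_deriv hq.exists_norm_le
    (hq.bddContDiff_zero.continuous_comp hW)).deriv.exists_norm_le

lemma hasDerivAt_deriv_comp (hq : StandingWave W q) (hW : ContDiff ℝ 1 (deriv W)) (s : ℝ) :
    HasDerivAt (fun s => deriv W (q s)) (deriv (deriv W) (q s) * deriv q s) s :=
  (hW.differentiable one_ne_zero (q s)).hasDerivAt.comp s (hq.hasDerivAt s)

lemma bddContDiff_potential (hq : StandingWave W q) (hW : ContDiff ℝ 1 (deriv W)) :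
    BddContDiff 0 fun s => deriv (deriv W) (q s) :=
  hq.bddContDiff_zero.continuous_comp (hW.continuous_deriv le_rfl)

lemma bddContDiff_deriv (hq : StandingWave W q) (hW : ContDiff ℝ 1 (deriv W)) :
    BddContDiff 2 (deriv q) := by
  have hbdd := hq.exists_norm_deriv_le hW.continuous
  exact bddContDiff_two_of_hasDerivAt hq.hasDerivAt_deriv (hq.hasDerivAt_deriv_comp hW) hbdd <|
    (hq.bddContDiff_potential hW).mul (bddContDiff_zero_iff.2
      ⟨continuous_iff_continuousAt.2 fun s => (hq.hasDerivAt_deriv s).continuousAt, hbdd⟩)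

lemma iteratedDeriv_two_deriv (hq : StandingWave W q) (hW : ContDiff ℝ 1 (deriv W)) (s : ℝ) :
    iteratedDeriv 2 (deriv q) s = deriv (deriv W) (q s) * deriv q s :=
  congrFun (iteratedDeriv_two_of_hasDerivAt hq.hasDerivAt_deriv (hq.hasDerivAt_deriv_comp hW)) s

lemma deriv_pos (hq : StandingWave W q) (hW : ContDiff ℝ 1 (deriv W)) (s : ℝ) :
    0 < deriv q s := by
  have hnonneg (t : ℝ) : 0 ≤ deriv q t := hq.2.1.monotone.deriv_nonneg
  obtain ⟨C, hC⟩ := (hq.bddContDiff_potential hW).exists_norm_le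
  have hmono : Monotone fun t => Real.exp ((|C| + 1) * t) * deriv q t :=
    monotone_exp_mul_of_le_sq_mul (by positivity) (hq.bddContDiff_deriv hW) fun t => by
      rw [hq.iteratedDeriv_two_deriv hW]
      refine mul_le_mul_of_nonneg_right ?_ (hnonneg t)
      nlinarith [(le_abs_self _).trans (hC t), le_abs_self C, abs_nonneg C]
  obtain ⟨t, ht, hslope⟩ := exists_hasDerivAt_eq_slope q (deriv q) (sub_one_lt s)
    hq.1.continuous.continuousOn fun t _ => hq.hasDerivAt t
  have ht_pos : 0 < deriv q t := by
    rw [hslope]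
    exact div_pos (sub_pos.2 (hq.2.1 (sub_one_lt s))) (by linarith)
  exact pos_of_mul_pos_right
    ((mul_pos (Real.exp_pos _) ht_pos).trans_le (hmono ht.2.le)) (Real.exp_pos _).le

lemma eventually_le_potential (hq : StandingWave W q) (hW : Continuous (deriv (deriv W)))
    (hneg : 0 < deriv (deriv W) (-1)) (hpos : 0 < deriv (deriv W) 1) :
    ∃ c > 0, ∀ᶠ s in cocompact ℝ, c ≤ deriv (deriv W) (q s) := by
  refine ⟨min (deriv (deriv W) (-1)) (deriv (deriv W) 1) / 2, half_pos (lt_min hneg hpos), ?_⟩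
  rw [cocompact_eq_atBot_atTop, eventually_sup]
  constructor
  · exact ((hW.tendsto (-1)).comp hq.2.2.2.2.2.2).eventually_const_le
      (by linarith [min_le_left (deriv (deriv W) (-1)) (deriv (deriv W) 1)])
  · exact ((hW.tendsto 1).comp hq.2.2.2.2.2.1).eventually_const_le
      (by linarith [min_le_right (deriv (deriv W) (-1)) (deriv (deriv W) 1)])

theorem isGroundState (hq : StandingWave W q) (hW : ContDiff ℝ 1 (deriv W))
    (hneg : 0 < deriv (deriv W) (-1)) (hpos : 0 < deriv (deriv W) 1) :
    IsGroundState (fun s => deriv (deriv W) (q s)) (deriv q) where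
  bddContDiff_potential := hq.bddContDiff_potential hW
  bddContDiff := hq.bddContDiff_deriv hW
  pos := hq.deriv_pos hW
  iteratedDeriv_two_eq := hq.iteratedDeriv_two_deriv hW
  eventually_le_potential := hq.eventually_le_potential (hW.continuous_deriv le_rfl) hneg hpos

end StandingWave

theorem approximate_correctors_exist_general {d : ℕ} {m : Euc d → Euc d → ℝ}
    (hm : Continuous fun p : Euc d × Euc d => m p.1 p.2)
    (hper : ∀ y v z, IsIntVec z → m (y + z) v = m y v) {W q : ℝ → ℝ} (hW : ContDiff ℝ 2 W)
    (hneg : 0 < deriv (deriv W) (-1)) (hpos : 0 < deriv (deriv W) 1) (hq : StandingWave W q)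
    {e : Euc d} (he : ‖e‖ = 1) (hirr : ¬ RatDir e) {ν : ℝ} (hν : 0 < ν) :
    ∃ P : ℝ × Euc d → ℝ,
      (∀ (s : ℝ) (y z : Euc d), IsIntVec z → P (s, y + z) = P (s, y)) ∧
      ContDiff ℝ 2 P ∧
      (∃ C : ℝ, ∀ n : ℕ, n ≤ 2 → ∀ p : ℝ × Euc d, ‖iteratedFDeriv ℝ n P p‖ ≤ C) ∧
      ∀ (s : ℝ) (y : Euc d),
        |(m y (deriv q s • e) - effMob m q e) * deriv q s
          - (dSS P s y + 2 * mixedDeriv e P s y + lapY P s y)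
          + deriv (deriv W) (q s) * P (s, y)| ≤ ν * deriv q s := by
  have hground := hq.isGroundState ((contDiff_succ_iff_deriv (n := 1)).1 hW).2.2 hneg hpos
  obtain ⟨P, hPper, ⟨hP, hPbdd⟩, hPapprox⟩ := hground.exists_approx_corrector
    (F := fun r y => m y (r • e))
    (hm.comp (f := fun p : ℝ × Euc d => (p.2, p.1 • e)) (by fun_prop))
    (fun r y z hz => hper y (r • e) z hz) he hirr hν
  exact ⟨P, hPper, hP, hPbdd, hPapprox⟩

/-- Theorem 4.1: existence of approximate correctors in irrational directions. -/
theorem approximate_correctors_exist (d : ℕ) (hd : 2 ≤ d)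
    (m : Euc d → Euc d → ℝ) (θ Θ : ℝ) (hm : Mobility d m θ Θ)
    (W q : ℝ → ℝ) (hW : DoubleWell W) (hq : StandingWave W q)
    (e : Euc d) (he : ‖e‖ = 1) (hirr : ¬ RatDir e) (ν : ℝ) (hν : 0 < ν) :
    ∃ P : ℝ × Euc d → ℝ,
      (∀ (s : ℝ) (y z : Euc d), IsIntVec z → P (s, y + z) = P (s, y)) ∧
      ContDiff ℝ 2 P ∧
      (∃ C : ℝ, ∀ n : ℕ, n ≤ 2 → ∀ p : ℝ × Euc d, ‖iteratedFDeriv ℝ n P p‖ ≤ C) ∧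
      ∀ (s : ℝ) (y : Euc d),
        |(m y (deriv q s • e) - effMob m q e) * deriv q s
          - (dSS P s y + 2 * mixedDeriv e P s y + lapY P s y)
          + deriv (deriv W) (q s) * P (s, y)| ≤ ν * deriv q s := by
  obtain ⟨hW3, -, -, -, -, -, -, -, -, -, hneg, hpos, -⟩ := hW
  exact approximate_correctors_exist_general hm.1 hm.2.1 (hW3.of_le (by norm_num)) hneg hpos hq
    he hirr hν

end
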